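/- arXiv:1403.5413 — 3 statements merged into one kernel-verified Lean document; each statement's English description precedes it below -/
import Mathlib

section
/- For all p > 1 and q > 1 with 1/p + 1/q > 1, there exists a constant C_{p,q} > 0, depending only on p and q, such that: for every a < b and all functions f, g : [a;b] → ℝ with no common points of discontinuity, with f of finite p-variation and g of finite q-variation on [a;b], the indefinite Riemann–Stieltjes integral t ↦ ∫_a^t f dg (t ∈ [a;b]) satisfies ‖∫_a^· f dg‖_{q-var,[a;b]} ≤ ( C_{p,q} · ‖f‖_{p-var,[a;b]}^{p − p/q} · ‖f‖_{osc,[a;b]}^{1 + p/q − p} + ‖f‖_{∞,[a;b]} ) · ‖g‖_{q-var,[a;b]}. -/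
open Filter Set

/-- Truncated variation of `f` on `[a;b]` with truncation parameter `δ`. -/
noncomputable def truncVar (f : ℝ → ℝ) (δ a b : ℝ) : ENNReal :=
  ⨆ (n : ℕ) (t : Fin (n + 1) → ℝ) (_ : StrictMono t)
    (_ : ∀ i, t i ∈ Set.Icc a b),
    ∑ i : Fin n, ENNReal.ofReal (|f (t i.succ) - f (t i.castSucc)| - δ)

/-- p-variation of `f` on `[a;b]`. -/
noncomputable def pVar (f : ℝ → ℝ) (p a b : ℝ) : ENNReal :=
  ⨆ (n : ℕ) (t : Fin (n + 1) → ℝ) (_ : StrictMono t)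
    (_ : ∀ i, t i ∈ Set.Icc a b),
    ∑ i : Fin n, ENNReal.ofReal (|f (t i.succ) - f (t i.castSucc)| ^ p)

/-- The p-variation norm `(V^p(f,[a;b]))^{1/p}`. -/
noncomputable def pVarNorm (f : ℝ → ℝ) (p a b : ℝ) : ℝ :=
  (pVar f p a b).toReal ^ (1 / p)

/-- Oscillation norm `sup_{a ≤ s < t ≤ b} |f t - f s|`. -/
noncomputable def oscNorm (f : ℝ → ℝ) (a b : ℝ) : ℝ :=
  sSup {x | ∃ s ∈ Set.Icc a b, ∃ t ∈ Set.Icc a b, s < t ∧ x = |f t - f s|}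

/-- Sup norm `sup_{a ≤ t ≤ b} |f t|`. -/
noncomputable def supNorm (f : ℝ → ℝ) (a b : ℝ) : ℝ :=
  sSup {x | ∃ t ∈ Set.Icc a b, x = |f t|}

/-- `I` is the Riemann–Stieltjes integral `∫_a^b f dg`. -/
def RSIntegral (f g : ℝ → ℝ) (a b : ℝ) (I : ℝ) : Prop :=
  ∀ ε > (0 : ℝ), ∃ δ > (0 : ℝ), ∀ (n : ℕ) (t : Fin (n + 1) → ℝ) (ξ : Fin n → ℝ),
    StrictMono t → t 0 = a → t (Fin.last n) = b →
    (∀ i : Fin n, t i.castSucc ≤ ξ i ∧ ξ i ≤ t i.succ) →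
    (∀ i : Fin n, t i.succ - t i.castSucc < δ) →
    |∑ i : Fin n, f (ξ i) * (g (t i.succ) - g (t i.castSucc)) - I| < ε

/-- `f` is regulated on `[a;b]`: all the relevant one-sided limits exist and are finite. -/
def Regulated (f : ℝ → ℝ) (a b : ℝ) : Prop :=
  (∃ L : ℝ, Tendsto f (nhdsWithin a (Set.Ioi a)) (nhds L)) ∧
  (∃ L : ℝ, Tendsto f (nhdsWithin b (Set.Iio b)) (nhds L)) ∧
  ∀ x ∈ Set.Ioo a b,
    (∃ L : ℝ, Tendsto f (nhdsWithin x (Set.Iio x)) (nhds L)) ∧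
    (∃ L : ℝ, Tendsto f (nhdsWithin x (Set.Ioi x)) (nhds L))

/-- `f` and `g` have no common points of discontinuity on `[a;b]`. -/
def NoCommonDiscont (f g : ℝ → ℝ) (a b : ℝ) : Prop :=
  ∀ x ∈ Set.Icc a b,
    ContinuousWithinAt f (Set.Icc a b) x ∨ ContinuousWithinAt g (Set.Icc a b) x


lemma telesc (F : ℝ → ℝ → ℝ) (ξ : ℕ → ℝ) (k m : ℕ) :
    ∑ j ∈ Finset.range (k + 2 + m), F (ξ j) (ξ (j + 1)) =
    ∑ j ∈ Finset.range (k + 1 + m), F (ξ (if j < k + 1 then j else j + 1))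
      (ξ (if j + 1 < k + 1 then j + 1 else j + 1 + 1))
    + (F (ξ k) (ξ (k + 1)) + F (ξ (k + 1)) (ξ (k + 2)) - F (ξ k) (ξ (k + 2))) := by
  induction m with
  | zero =>
    simp only [add_zero]
    rw [Finset.sum_range_succ, Finset.sum_range_succ, Finset.sum_range_succ]
    have : ∑ j ∈ Finset.range k, F (ξ (if j < k + 1 then j else j + 1))
      (ξ (if j + 1 < k + 1 then j + 1 else j + 1 + 1)) =
      ∑ j ∈ Finset.range k, F (ξ j) (ξ (j + 1)) := by
      apply Finset.sum_congr rfl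
      intro j hj
      rw [Finset.mem_range] at hj
      rw [if_pos (by omega), if_pos (by omega)]
    rw [this]
    simp
    ring
  | succ m ih =>
    rw [← add_assoc, ← add_assoc, Finset.sum_range_succ, ih, Finset.sum_range_succ _ (k + 1 + m)]
    rw [if_neg (by omega), if_neg (by omega)]
    have : k + 2 + m = k + 1 + m + 1 := by omega
    rw [this]
    ring

/-- variation bound -/
def VB (f : ℝ → ℝ) (p s t V : ℝ) : Prop :=
  ∀ (n : ℕ) (ξ : ℕ → ℝ), Monotone ξ → s ≤ ξ 0 → ξ n ≤ t →
    ∑ i ∈ Finset.range n, |f (ξ (i + 1)) - f (ξ i)| ^ p ≤ V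

lemma VB.mono {f : ℝ → ℝ} {p s t V V' : ℝ} (h : VB f p s t V) (hV : V ≤ V') : VB f p s t V' :=
  fun n ξ h1 h2 h3 => (h n ξ h1 h2 h3).trans hV

lemma VB.two {f : ℝ → ℝ} {p s t V : ℝ} (h : VB f p s t V) {x y : ℝ} (hx : x ∈ Icc s t)
    (hy : y ∈ Icc s t) : |f x - f y| ^ p ≤ V := by
  wlog hxy : y ≤ x generalizing x y
  · rw [abs_sub_comm]; exact this hy hx (by linarith)
  have := h 1 (fun i => if i = 0 then y else x) ?_ (by simpa using hy.1) (by simpa using hx.2)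
  · simpa using this
  · intro i j hij
    by_cases hi : i = 0 <;> by_cases hj : j = 0 <;> simp [hi, hj, hxy]
    omega

lemma young_discrete {f g : ℝ → ℝ} {p q s t V W O : ℝ} (hp : 1 < p) (hq : 1 < q)
    (hV : 0 < V) (hW : 0 < W) (hf : VB f p s t V) (hg : VB g q s t W)
    (hO : ∀ x ∈ Icc s t, ∀ y ∈ Icc s t, |f x - f y| ≤ O) (m : ℕ) :
    ∀ ξ : ℕ → ℝ, Monotone ξ → s ≤ ξ 0 → ξ (m + 1) ≤ t →
    |∑ i ∈ Finset.range (m + 1), f (ξ i) * (g (ξ (i + 1)) - g (ξ i))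
      - f (ξ 0) * (g (ξ (m + 1)) - g (ξ 0))| ≤
    ∑ k ∈ Finset.range m, min O ((2 * V / (k + 1 : ℝ)) ^ (1 / p)) *
      (2 * W / (k + 1 : ℝ)) ^ (1 / q) := by
  induction m with
  | zero => intro ξ _ _ _; simp
  | succ m ih =>
    intro ξ hξ h0 h1
    have hm : (0 : ℝ) < m + 1 := by positivity
    obtain ⟨k, hk, hk2⟩ : ∃ k ∈ Finset.range (m + 1),
        |f (ξ (k + 1)) - f (ξ k)| ^ p / V + |g (ξ (k + 1 + 1)) - g (ξ (k + 1))| ^ q / W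
          ≤ 2 / (m + 1 : ℝ) := by
      apply Finset.exists_le_of_sum_le (by simp)
      rw [Finset.sum_add_distrib, ← Finset.sum_div, ← Finset.sum_div]
      have e1 := hf (m + 1) ξ hξ h0 ((hξ (by omega)).trans h1)
      have e2 := hg (m + 1) (fun i => ξ (i + 1)) (fun i j h => hξ (by omega))
        (h0.trans (hξ (by omega))) h1
      have e3 := (div_le_one hV).2 e1
      have e4 := (div_le_one hW).2 e2
      have : ∑ i ∈ Finset.range (m + 1), 2 / ((m : ℝ) + 1) = 2 := by
        simp; field_simp
      rw [this]
      linarith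
    rw [Finset.mem_range] at hk
    have pa : 0 ≤ |f (ξ (k + 1)) - f (ξ k)| ^ p / V := by positivity
    have pb : 0 ≤ |g (ξ (k + 1 + 1)) - g (ξ (k + 1))| ^ q / W := by positivity
    have mem : ∀ i ≤ m + 2, ξ i ∈ Icc s t := fun i hi =>
      ⟨h0.trans (hξ (by omega)), (hξ (by omega)).trans h1⟩
    have ba : |f (ξ (k + 1)) - f (ξ k)| ≤ min O ((2 * V / (m + 1 : ℝ)) ^ (1 / p)) := by
      apply le_min (hO _ (mem _ (by omega)) _ (mem _ (by omega)))
      rw [one_div, Real.le_rpow_inv_iff_of_pos (abs_nonneg _) (by positivity) (by linarith)]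
      have : |f (ξ (k + 1)) - f (ξ k)| ^ p / V ≤ 2 / (m + 1 : ℝ) := by linarith
      rw [div_le_iff₀ hV] at this
      calc _ ≤ _ := this
        _ = _ := by ring
    have bb : |g (ξ (k + 1 + 1)) - g (ξ (k + 1))| ≤ (2 * W / (m + 1 : ℝ)) ^ (1 / q) := by
      rw [one_div, Real.le_rpow_inv_iff_of_pos (abs_nonneg _) (by positivity) (by linarith)]
      have : |g (ξ (k + 1 + 1)) - g (ξ (k + 1))| ^ q / W ≤ 2 / (m + 1 : ℝ) := by linarith
      rw [div_le_iff₀ hW] at this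
      calc _ ≤ _ := this
        _ = _ := by ring
    obtain ⟨r, rfl⟩ : ∃ r, m = k + r := ⟨m - k, by omega⟩
    have key := telesc (fun x y => f x * (g y - g x)) ξ k r
    have ih' := ih (fun j => ξ (if j < k + 1 then j else j + 1)) (by
      intro i j hij
      apply hξ
      split_ifs <;> omega) (by simpa using h0) (by
      show ξ (if k + r + 1 < k + 1 then k + r + 1 else k + r + 1 + 1) ≤ t
      rw [if_neg (by omega)]
      exact h1)
    rw [Finset.sum_range_succ _ (k + r)]
    beta_reduce at ih' key
    rw [if_neg (by omega : ¬ k + r + 1 < k + 1), if_pos (by omega : 0 < k + 1)] at ih'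
    rw [show k + r + 1 + 1 = k + 2 + r by omega] at *
    rw [show k + r + 1 = k + 1 + r by omega] at *
    rw [key]
    have hprod := mul_le_mul ba bb (abs_nonneg _) ((abs_nonneg _).trans ba)
    rw [← abs_mul] at hprod
    refine le_trans ?_ (add_le_add ih' hprod)
    refine le_trans (le_of_eq ?_) (abs_add_le _ _)
    congr 1
    ring

lemma sum_head {s : ℝ} (hs : 0 < s) (hs1 : s ≤ 1) (n : ℕ) :
    ∑ k ∈ Finset.range n, ((k : ℝ) + 1) ^ (s - 1) ≤ (n : ℝ) ^ s / s := by
  induction n with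
  | zero => simp [hs.ne']
  | succ n ih =>
    rw [Finset.sum_range_succ]
    have hn : (0 : ℝ) < n + 1 := by positivity
    have hx : (-1 : ℝ) ≤ -1 / (n + 1) := by
      rw [le_div_iff₀ hn]; nlinarith [(Nat.cast_nonneg n : (0:ℝ) ≤ n)]
    have h := rpow_one_add_le_one_add_mul_self hx hs.le hs1
    have e : (n : ℝ) = (1 + -1 / ((n : ℝ) + 1)) * (n + 1) := by field_simp; ring
    have h2 : (n : ℝ) ^ s ≤ (1 + s * (-1 / (n + 1))) * (n + 1 : ℝ) ^ s := by
      conv_lhs => rw [e]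
      rw [Real.mul_rpow (by linarith) hn.le]
      gcongr
    have h3 : (n + 1 : ℝ) ^ (s - 1) = (n + 1 : ℝ) ^ s / (n + 1) := Real.rpow_sub_one hn.ne' s
    push_cast
    have h4 : (n : ℝ) ^ s / s ≤ (n + 1 : ℝ) ^ s / s - (n + 1 : ℝ) ^ (s - 1) := by
      rw [h3, div_le_iff₀ hs]
      refine h2.trans (le_of_eq ?_)
      field_simp
      ring
    linarith

lemma sum_tail {u : ℝ} (hu : 0 < u) (k n : ℕ) :
    ∑ j ∈ Finset.range n, ((k : ℝ) + j + 1) ^ (-u - 1) ≤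
      (1 + 1 / u) * ((k : ℝ) + 1) ^ (-u) - 1 / u * ((k : ℝ) + n) ^ (-u) * (if n = 0 then 0 else 1) := by
  induction n with
  | zero => simp; positivity
  | succ n ih =>
    rw [Finset.sum_range_succ]
    rcases Nat.eq_zero_or_pos n with rfl | hn
    · simp
      have : ((k : ℝ) + 1) ^ (-u - 1) ≤ ((k : ℝ) + 1) ^ (-u) :=
        Real.rpow_le_rpow_of_exponent_le (by linarith [(Nat.cast_nonneg k : (0:ℝ) ≤ k)]) (by linarith)
      linarith
    · rw [if_neg (by omega)] at *
      have hn' : (1 : ℝ) ≤ n := by exact_mod_cast hn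
      have hk : (0 : ℝ) ≤ k := Nat.cast_nonneg k
      set x : ℝ := k + n with hx
      have hx1 : 1 ≤ x := by linarith
      have h3 : (x + 1 : ℝ) ^ (-u - 1) = (x + 1 : ℝ) ^ (-u) / (x + 1) :=
        Real.rpow_sub_one (by positivity) _
      have h5 : 1 + u / (x + 1) ≤ (x / (x + 1)) ^ (-u) := by
        rw [Real.rpow_def_of_pos (by positivity)]
        have := Real.add_one_le_exp (Real.log (x / (x + 1)) * -u)
        have l := Real.log_le_sub_one_of_pos (show 0 < x / (x + 1) by positivity)
        have : x / (x + 1) - 1 = - (1 / (x + 1)) := by field_simp; ring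
        have e : u / (x + 1) = u * (1 / (x + 1)) := by ring
        rw [this] at l
        nlinarith
      have h6 : x ^ (-u) = (x / (x + 1)) ^ (-u) * (x + 1) ^ (-u) := by
        rw [← Real.mul_rpow (by positivity) (by positivity)]
        congr 1; field_simp
      have h7 : (1 + u / (x + 1)) * (x + 1) ^ (-u) ≤ x ^ (-u) := by
        rw [h6]; gcongr
      have h8 : (x + 1) ^ (-u - 1) ≤ 1 / u * x ^ (-u) - 1 / u * (x + 1) ^ (-u) := by
        rw [h3]
        have : 1 / u * ((1 + u / (x + 1)) * (x + 1) ^ (-u)) ≤ 1 / u * x ^ (-u) := by gcongr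
        have e : 1 / u * ((1 + u / (x + 1)) * (x + 1) ^ (-u)) =
          1 / u * (x + 1) ^ (-u) + (x + 1) ^ (-u) / (x + 1) := by field_simp
        linarith
      push_cast
      rw [← add_assoc, ← hx]
      linarith

lemma series_bound {p q : ℝ} (hq : 1 < q) (hpq : 1 / p + 1 / q > 1) :
    ∃ C : ℝ, 0 < C ∧ ∀ N : ℝ, 0 < N → ∀ m : ℕ,
    ∑ k ∈ Finset.range m, min 1 ((N / (k + 1 : ℝ)) ^ (1 / p)) * (k + 1 : ℝ) ^ (-(1 / q)) ≤
      C * N ^ (1 - 1 / q) := by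
  have hq1 : 1 / q < 1 := by rw [div_lt_one (by linarith)]; exact hq
  have hq0 : 0 < 1 / q := by positivity
  set s := 1 - 1 / q with hs
  set u := 1 / p + 1 / q - 1 with hu
  have hs0 : 0 < s := by linarith
  have hu0 : 0 < u := by linarith
  refine ⟨1 / s + (1 + 1 / u), by positivity, ?_⟩
  intro N hN m
  set K := ⌊N⌋₊ with hK
  have hKN : (K : ℝ) ≤ N := Nat.floor_le hN.le
  have hNK : N < K + 1 := Nat.lt_floor_add_one N
  have nn : ∀ k : ℕ, 0 ≤ min 1 ((N / (k + 1 : ℝ)) ^ (1 / p)) * (k + 1 : ℝ) ^ (-(1 / q)) := by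
    intro k
    have : 0 ≤ min 1 ((N / (k + 1 : ℝ)) ^ (1 / p)) := le_min zero_le_one (by positivity)
    positivity
  calc _ ≤ ∑ k ∈ Finset.range (K + m), min 1 ((N / (k + 1 : ℝ)) ^ (1 / p)) * (k + 1 : ℝ) ^ (-(1 / q)) := by
        apply Finset.sum_le_sum_of_subset_of_nonneg
        · intro i; simp; omega
        · intro i _ _; exact nn i
    _ ≤ N ^ s / s + (1 + 1 / u) * N ^ s := by
        rw [Finset.sum_range_add]
        apply add_le_add
        · calc _ ≤ ∑ k ∈ Finset.range K, ((k : ℝ) + 1) ^ (s - 1) := by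
                apply Finset.sum_le_sum
                intro k _
                rw [show s - 1 = -(1 / q) by rw [hs]; ring]
                apply mul_le_of_le_one_left (by positivity) (min_le_left _ _)
            _ ≤ _ := sum_head hs0 (by linarith) K
            _ ≤ _ := by gcongr
        · calc _ ≤ ∑ j ∈ Finset.range m, N ^ (1 / p) * ((K : ℝ) + j + 1) ^ (-u - 1) := by
                apply Finset.sum_le_sum
                intro j _
                push_cast
                have hpos : (0 : ℝ) < K + j + 1 := by positivity
                calc _ ≤ (N / (K + j + 1 : ℝ)) ^ (1 / p) * (K + j + 1 : ℝ) ^ (-(1 / q)) := by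
                      gcongr; exact min_le_right _ _
                  _ = _ := by
                      rw [Real.div_rpow hN.le hpos.le, div_eq_mul_inv, ← Real.rpow_neg hpos.le,
                        mul_assoc, ← Real.rpow_add hpos]
                      congr 2; rw [hu]; ring
            _ = N ^ (1 / p) * ∑ j ∈ Finset.range m, ((K : ℝ) + j + 1) ^ (-u - 1) := by
                rw [Finset.mul_sum]
            _ ≤ N ^ (1 / p) * ((1 + 1 / u) * N ^ (-u)) := by
                gcongr
                refine (sum_tail hu0 K m).trans ?_
                have h1 : 0 ≤ 1 / u * ((K : ℝ) + m) ^ (-u) * (if m = 0 then 0 else 1) := by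
                  split_ifs <;> positivity
                have h2 : ((K : ℝ) + 1) ^ (-u) ≤ N ^ (-u) :=
                  Real.rpow_le_rpow_of_nonpos hN hNK.le (by linarith)
                have h3 : (1 + 1 / u) * ((K : ℝ) + 1) ^ (-u) ≤ (1 + 1 / u) * N ^ (-u) := by gcongr
                linarith
            _ = _ := by
                have : N ^ (1 / p) * N ^ (-u) = N ^ s := by
                  rw [← Real.rpow_add hN]; congr 1; rw [hu, hs]; ring
                rw [← this]; ring
    _ = _ := by ring


lemma d_bound {p q d V O : ℝ} (hp : 1 < p) (hq : 1 < q) (hpq : 1 / p + 1 / q > 1)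
    (hd : 0 ≤ d) (hdV : d ^ p ≤ V) (hdO : d ≤ O) :
    d ≤ V ^ (1 - 1 / q) * O ^ (1 + p / q - p) := by
  have hq1 : 1 / q < 1 := by rw [div_lt_one (by linarith)]; exact hq
  have h1 : 0 < 1 + p / q - p := by
    have : p * (1 / p + 1 / q) > p * 1 := by gcongr
    have e : p * (1 / p + 1 / q) = 1 + p / q := by field_simp
    linarith
  have h2 : 0 < p * (1 - 1 / q) := mul_pos (by linarith) (by linarith)
  calc d = d ^ (p * (1 - 1 / q) + (1 + p / q - p)) := by
        rw [show p * (1 - 1 / q) + (1 + p / q - p) = 1 by ring, Real.rpow_one]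
    _ = (d ^ p) ^ (1 - 1 / q) * d ^ (1 + p / q - p) := by
        rw [Real.rpow_add_of_nonneg hd h2.le h1.le, Real.rpow_mul hd]
    _ ≤ _ := by
        have : 0 ≤ 1 - 1 / q := by linarith
        have : 0 ≤ V := le_trans (by positivity) hdV
        gcongr

lemma young_pos {p q : ℝ} (hp : 1 < p) (hq : 1 < q) (hpq : 1 / p + 1 / q > 1) :
    ∃ C : ℝ, 0 < C ∧ ∀ (f g : ℝ → ℝ) (s t V W O : ℝ), 0 < V → 0 < W → 0 < O →
      VB f p s t V → VB g q s t W → (∀ x ∈ Icc s t, ∀ y ∈ Icc s t, |f x - f y| ≤ O) →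
      ∀ (n : ℕ) (ξ : ℕ → ℝ), Monotone ξ → ξ 0 = s → ξ n = t → ∀ c ∈ Icc s t,
      |∑ i ∈ Finset.range n, f (ξ i) * (g (ξ (i + 1)) - g (ξ i)) - f c * (g t - g s)|
        ≤ C * V ^ (1 - 1 / q) * O ^ (1 + p / q - p) * W ^ (1 / q) := by
  obtain ⟨C, hC, H⟩ := series_bound (p := p) hq hpq
  refine ⟨2 * C + 1, by positivity, ?_⟩
  intro f g s t V W O hV hW hO hf hg hosc n ξ hξ h0 hn c hc
  rcases n with _ | m
  · have : s = t := by rw [← h0, ← hn]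
    subst this
    simp
    positivity
  have hst : s ≤ t := hc.1.trans hc.2
  have hs : s ∈ Icc s t := ⟨le_rfl, hst⟩
  have ht : t ∈ Icc s t := ⟨hst, le_rfl⟩
  have Y := young_discrete hp hq hV hW hf hg hosc m ξ hξ h0.ge hn.le
  rw [h0, hn] at Y
  have hd := d_bound hp hq hpq (abs_nonneg _) (hf.two hs hc) (hosc s hs c hc)
  have he : |g t - g s| ≤ W ^ (1 / q) := by
    rw [one_div, Real.le_rpow_inv_iff_of_pos (abs_nonneg _) hW.le (by linarith)]
    exact hg.two ht hs
  have hS : ∑ k ∈ Finset.range m, min O ((2 * V / (k + 1 : ℝ)) ^ (1 / p)) *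
      (2 * W / (k + 1 : ℝ)) ^ (1 / q) ≤
      2 * C * V ^ (1 - 1 / q) * O ^ (1 + p / q - p) * W ^ (1 / q) := by
    have hN : 0 < 2 * V / O ^ p := by positivity
    calc _ = O * (2 * W) ^ (1 / q) * ∑ k ∈ Finset.range m,
          min 1 (((2 * V / O ^ p) / (k + 1 : ℝ)) ^ (1 / p)) * (k + 1 : ℝ) ^ (-(1 / q)) := by
          rw [Finset.mul_sum]
          apply Finset.sum_congr rfl
          intro k _
          have hk : (0 : ℝ) < k + 1 := by positivity
          have e1 : (2 * V / (k + 1 : ℝ)) ^ (1 / p) =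
              O * ((2 * V / O ^ p) / (k + 1 : ℝ)) ^ (1 / p) := by
            have : 2 * V / (k + 1 : ℝ) = O ^ p * ((2 * V / O ^ p) / (k + 1 : ℝ)) := by
              field_simp
            rw [this, Real.mul_rpow (by positivity) (by positivity), ← Real.rpow_mul hO.le,
              mul_one_div_cancel (by linarith), Real.rpow_one]
          have e2 : (2 * W / (k + 1 : ℝ)) ^ (1 / q) =
              (2 * W) ^ (1 / q) * (k + 1 : ℝ) ^ (-(1 / q)) := by
            rw [Real.div_rpow (by positivity) hk.le, Real.rpow_neg hk.le, div_eq_mul_inv]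
          rw [e1, e2]
          have e3 : ∀ x : ℝ, min O (O * x) = O * min 1 x := by
            intro x
            rw [mul_min_of_nonneg _ _ hO.le, mul_one]
          rw [e3]; ring
      _ ≤ O * (2 * W) ^ (1 / q) * (C * (2 * V / O ^ p) ^ (1 - 1 / q)) := by
          gcongr
          exact H _ hN m
      _ = _ := by
          rw [Real.div_rpow (by positivity) (by positivity), Real.mul_rpow zero_le_two hV.le,
            Real.mul_rpow zero_le_two hW.le, ← Real.rpow_mul hO.le]
          have e1 : (2 : ℝ) = 2 ^ (1 / q) * 2 ^ (1 - 1 / q) := by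
            rw [← Real.rpow_add two_pos]; simp
          have e2 : O ^ (1 + p / q - p) = O / O ^ (p * (1 - 1 / q)) := by
            rw [show 1 + p / q - p = 1 - p * (1 - 1 / q) by ring, Real.rpow_sub hO, Real.rpow_one]
          rw [e2]
          conv_rhs => rw [e1]
          ring
  have e : ∑ i ∈ Finset.range (m + 1), f (ξ i) * (g (ξ (i + 1)) - g (ξ i)) - f c * (g t - g s)
    = (∑ i ∈ Finset.range (m + 1), f (ξ i) * (g (ξ (i + 1)) - g (ξ i)) - f s * (g t - g s)) +
      (f s - f c) * (g t - g s) := by ring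
  rw [e]
  refine (abs_add_le _ _).trans ?_
  have h2 : |(f s - f c) * (g t - g s)| ≤ V ^ (1 - 1 / q) * O ^ (1 + p / q - p) * W ^ (1 / q) := by
    rw [abs_mul]
    gcongr
  linarith [Y.trans hS]

lemma young {p q : ℝ} (hp : 1 < p) (hq : 1 < q) (hpq : 1 / p + 1 / q > 1) :
    ∃ C : ℝ, 0 < C ∧ ∀ (f g : ℝ → ℝ) (s t V W O : ℝ), 0 ≤ V → 0 ≤ W → 0 ≤ O →
      VB f p s t V → VB g q s t W → (∀ x ∈ Icc s t, ∀ y ∈ Icc s t, |f x - f y| ≤ O) →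
      ∀ (n : ℕ) (ξ : ℕ → ℝ), Monotone ξ → ξ 0 = s → ξ n = t → ∀ c ∈ Icc s t,
      |∑ i ∈ Finset.range n, f (ξ i) * (g (ξ (i + 1)) - g (ξ i)) - f c * (g t - g s)|
        ≤ C * V ^ (1 - 1 / q) * O ^ (1 + p / q - p) * W ^ (1 / q) := by
  obtain ⟨C, hC, H⟩ := young_pos hp hq hpq
  refine ⟨C, hC, ?_⟩
  intro f g s t V W O hV hW hO hf hg hosc n ξ hξ h0 hn c hc
  have hq1 : 1 / q < 1 := by rw [div_lt_one (by linarith)]; exact hq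
  have hq0 : 0 < 1 / q := by positivity
  have h1 : 0 < 1 + p / q - p := by
    have : p * (1 / p + 1 / q) > p * 1 := by gcongr
    have e : p * (1 / p + 1 / q) = 1 + p / q := by field_simp
    linarith
  have h3 : 0 ≤ 1 - 1 / q := by linarith
  have ct : Tendsto (fun ε : ℝ => C * (V + ε) ^ (1 - 1 / q) * (O + ε) ^ (1 + p / q - p) *
      (W + ε) ^ (1 / q)) (nhdsWithin 0 (Ioi 0)) (nhds (C * (V + 0) ^ (1 - 1 / q) *
      (O + 0) ^ (1 + p / q - p) * (W + 0) ^ (1 / q))) := by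
    apply Tendsto.mono_left _ nhdsWithin_le_nhds
    have c1 : ∀ (A r : ℝ), 0 ≤ r → Continuous (fun ε : ℝ => (A + ε) ^ r) := fun A r hr =>
      (continuous_const.add continuous_id).rpow_const (fun _ => Or.inr hr)
    exact (((continuous_const.mul (c1 V _ h3)).mul (c1 O _ h1.le)).mul (c1 W _ hq0.le)).tendsto 0
  simp only [add_zero] at ct
  refine ge_of_tendsto ct ?_
  filter_upwards [self_mem_nhdsWithin] with ε hε
  have hε : 0 < ε := hε
  exact H f g s t (V + ε) (W + ε) (O + ε) (by linarith) (by linarith) (by linarith)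
    (hf.mono (by linarith)) (hg.mono (by linarith))
    (fun x hx y hy => (hosc x hx y hy).trans (by linarith)) n ξ hξ h0 hn c hc

/-- compactness -/
lemma compactness {a b : ℝ} (hab : a ≤ b) (f g : ℝ → ℝ) (κ : ℝ → ℝ → ℝ)
    (H : ∀ F : Finset ℝ, ∃ Y : ℝ → ℝ, ∀ s ∈ F, ∀ t ∈ F, a ≤ s → s ≤ t → t ≤ b → ∀ c ∈ Icc s t,
      |Y t - Y s - f c * (g t - g s)| ≤ κ s t) :
    ∃ Y : ℝ → ℝ, Y a = 0 ∧ ∀ s t, a ≤ s → s ≤ t → t ≤ b → ∀ c ∈ Icc s t,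
      |Y t - Y s - f c * (g t - g s)| ≤ κ s t := by
  classical
  choose Z hZ using H
  let U : Ultrafilter (Finset ℝ) := Ultrafilter.of atTop
  have hU : (U : Filter (Finset ℝ)) ≤ atTop := Ultrafilter.of_le _
  have hmem : ∀ x : ℝ, ∀ᶠ F in (U : Filter (Finset ℝ)), x ∈ F := by
    intro x
    apply hU
    filter_upwards [eventually_ge_atTop ({x} : Finset ℝ)] with F hF
    exact hF (by simp)
  have hlim : ∀ x : ℝ, ∃ y : ℝ, x ∈ Icc a b →
      Tendsto (fun F => Z F x - Z F a) (U : Filter (Finset ℝ)) (nhds y) := by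
    intro x
    by_cases hx : x ∈ Icc a b
    · have hc : IsCompact (Metric.closedBall (f a * (g x - g a)) (κ a x)) := isCompact_closedBall _ _
      have : ∀ᶠ F in (U : Filter (Finset ℝ)), Z F x - Z F a ∈
          Metric.closedBall (f a * (g x - g a)) (κ a x) := by
        filter_upwards [hmem x, hmem a] with F h1 h2
        rw [Metric.mem_closedBall, Real.dist_eq]
        exact hZ F a h2 x h1 le_rfl hx.1 hx.2 a ⟨le_rfl, hx.1⟩
      obtain ⟨y, _, hy⟩ := hc.ultrafilter_le_nhds (U.map (fun F => Z F x - Z F a))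
        (le_principal_iff.2 this)
      exact ⟨y, fun _ => hy⟩
    · exact ⟨0, fun h => absurd h hx⟩
  choose Y hY using hlim
  refine ⟨Y, ?_, ?_⟩
  · have := hY a ⟨le_rfl, hab⟩
    simp only [sub_self] at this
    exact tendsto_nhds_unique this tendsto_const_nhds
  · intro s t h1 h2 h3 c hc
    have l := (((hY t ⟨h1.trans h2, h3⟩).sub (hY s ⟨h1, h2.trans h3⟩)).sub_const
      (f c * (g t - g s))).abs
    refine le_of_tendsto l ?_
    filter_upwards [hmem s, hmem t] with F hs ht
    have := hZ F s hs t ht h1 h2 h3 c hc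
    rwa [sub_sub_sub_cancel_right]

lemma finset_seq (F : Finset ℝ) : ∃ ξ : ℕ → ℝ, Monotone ξ ∧ ∀ x ∈ F, ∃ i, ξ i = x := by
  rcases F.eq_empty_or_nonempty with rfl | hF
  · exact ⟨fun _ => 0, monotone_const, by simp⟩
  have hc : 0 < F.card := hF.card_pos
  let e := F.orderIsoOfFin rfl
  refine ⟨fun i => e ⟨min i (F.card - 1), by omega⟩, ?_, ?_⟩
  · intro i j hij
    apply e.monotone
    rw [Fin.mk_le_mk]
    omega
  · intro x hx
    refine ⟨(e.symm ⟨x, hx⟩ : Fin _), ?_⟩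
    have h := (e.symm ⟨x, hx⟩).2
    have : (⟨min (e.symm ⟨x, hx⟩ : Fin _) (F.card - 1), by omega⟩ : Fin F.card) = e.symm ⟨x, hx⟩ := by
      ext; simp; omega
    show ((e ⟨min (e.symm ⟨x, hx⟩ : Fin _) (F.card - 1), _⟩ : F) : ℝ) = x
    rw [this]
    simp

lemma exists_Y {a b : ℝ} (hab : a ≤ b) (f g : ℝ → ℝ) (κ : ℝ → ℝ → ℝ)
    (H : ∀ s t, a ≤ s → s ≤ t → t ≤ b → ∀ (n : ℕ) (ξ : ℕ → ℝ), Monotone ξ → ξ 0 = s → ξ n = t →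
      ∀ c ∈ Icc s t,
      |∑ i ∈ Finset.range n, f (ξ i) * (g (ξ (i + 1)) - g (ξ i)) - f c * (g t - g s)| ≤ κ s t) :
    ∃ Y : ℝ → ℝ, Y a = 0 ∧ ∀ s t, a ≤ s → s ≤ t → t ≤ b → ∀ c ∈ Icc s t,
      |Y t - Y s - f c * (g t - g s)| ≤ κ s t := by
  apply compactness hab
  intro F
  obtain ⟨ξ, hξ, hF⟩ := finset_seq F
  choose! k hk using hF
  refine ⟨fun x => ∑ i ∈ Finset.range (k x), f (ξ i) * (g (ξ (i + 1)) - g (ξ i)), ?_⟩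
  intro s hs t ht h1 h2 h3 c hc
  have hkk : k s ≤ k t := by
    by_contra hlt
    push Not at hlt
    have := hξ hlt.le
    rw [hk s hs, hk t ht] at this
    have : s = t := le_antisymm h2 this
    rw [this] at hlt
    exact lt_irrefl _ hlt
  obtain ⟨n, hn⟩ := Nat.exists_eq_add_of_le hkk
  have := H s t h1 h2 h3 n (fun i => ξ (k s + i)) (fun i j h => hξ (by omega)) (by simp [hk s hs])
    (by rw [← hn, hk t ht]) c hc
  simp only [hn, Finset.sum_range_add, add_sub_cancel_left]
  exact this


lemma dedup (f : ℝ → ℝ) {p : ℝ} (hp : 0 < p) (ξ : ℕ → ℝ) (hξ : Monotone ξ) (n : ℕ) :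
    ∃ (m : ℕ) (τ : Fin (m + 1) → ℝ), StrictMono τ ∧ (∀ i, τ i ∈ Icc (ξ 0) (ξ n)) ∧
      τ (Fin.last m) = ξ n ∧
      ∑ i : Fin m, ENNReal.ofReal (|f (τ i.succ) - f (τ i.castSucc)| ^ p) =
      ∑ i ∈ Finset.range n, ENNReal.ofReal (|f (ξ (i + 1)) - f (ξ i)| ^ p) := by
  induction n with
  | zero => exact ⟨0, fun _ => ξ 0, fun i j h => by omega, by simp, rfl, by simp⟩
  | succ n ih =>
    obtain ⟨m, τ, h1, h2, h3, h4⟩ := ih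
    rcases (hξ (Nat.le_succ n)).eq_or_lt with h | h
    · have h' : ξ (n + 1) = ξ n := h.symm
      refine ⟨m, τ, h1, by rwa [h'], by rw [h3, h'], ?_⟩
      rw [Finset.sum_range_succ, h4, h']
      simp [Real.zero_rpow hp.ne']
    · refine ⟨m + 1, Fin.snoc τ (ξ (n + 1)), ?_, ?_, by simp, ?_⟩
      · rw [Fin.strictMono_iff_lt_succ]
        intro i
        induction i using Fin.lastCases with
        | last => simp [h3]; exact h
        | cast i =>
          rw [Fin.snoc_castSucc, Fin.succ_castSucc, Fin.snoc_castSucc]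
          exact h1 (Fin.castSucc_lt_succ)
      · intro i
        induction i using Fin.lastCases with
        | last => simp; exact hξ (by omega)
        | cast i =>
          rw [Fin.snoc_castSucc]
          exact ⟨(h2 i).1, (h2 i).2.trans (hξ (by omega))⟩
      · rw [Fin.sum_univ_castSucc, Finset.sum_range_succ, ← h4]
        congr 1
        · apply Finset.sum_congr rfl
          intro i _
          rw [Fin.snoc_castSucc, Fin.succ_castSucc, Fin.snoc_castSucc]
        · simp [h3]

lemma sum_le_pVar (f : ℝ → ℝ) {p : ℝ} (hp : 0 < p) {s t : ℝ} (ξ : ℕ → ℝ) (hξ : Monotone ξ) (n : ℕ)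
    (h0 : s ≤ ξ 0) (h1 : ξ n ≤ t) :
    ∑ i ∈ Finset.range n, ENNReal.ofReal (|f (ξ (i + 1)) - f (ξ i)| ^ p) ≤ pVar f p s t := by
  obtain ⟨m, τ, a1, a2, a3, a4⟩ := dedup f hp ξ hξ n
  rw [← a4]
  unfold pVar
  refine le_iSup_of_le m (le_iSup_of_le τ (le_iSup_of_le a1 (le_iSup_of_le ?_ le_rfl)))
  exact fun i => ⟨h0.trans (a2 i).1, (a2 i).2.trans h1⟩

lemma fin_nat {n : ℕ} (τ : Fin (n + 1) → ℝ) (h : StrictMono τ) :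
    ∃ ξ : ℕ → ℝ, Monotone ξ ∧ (∀ i : Fin (n + 1), ξ i = τ i) := by
  refine ⟨fun i => τ ⟨min i n, by omega⟩, ?_, ?_⟩
  · intro i j hij
    apply h.monotone
    rw [Fin.mk_le_mk]; omega
  · intro i
    show τ _ = _
    congr 1
    ext
    simp
    omega

lemma fin_nat_sum {M : Type*} [AddCommMonoid M] {n : ℕ} (τ : Fin (n + 1) → ℝ) (ξ : ℕ → ℝ)
    (h : ∀ i : Fin (n + 1), ξ i = τ i) (F : ℝ → ℝ → M) :
    ∑ i : Fin n, F (τ i.castSucc) (τ i.succ) = ∑ i ∈ Finset.range n, F (ξ i) (ξ (i + 1)) := by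
  rw [Finset.sum_range]
  apply Finset.sum_congr rfl
  intro i _
  rw [← h, ← h]
  simp

lemma pVar_le_of {f : ℝ → ℝ} {p s t : ℝ} {B : ENNReal}
    (H : ∀ (n : ℕ) (ξ : ℕ → ℝ), Monotone ξ → s ≤ ξ 0 → ξ n ≤ t →
    ∑ i ∈ Finset.range n, ENNReal.ofReal (|f (ξ (i + 1)) - f (ξ i)| ^ p) ≤ B) :
    pVar f p s t ≤ B := by
  unfold pVar
  refine iSup_le fun n => iSup_le fun τ => iSup_le fun h1 => iSup_le fun h2 => ?_
  obtain ⟨ξ, hξ, he⟩ := fin_nat τ h1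
  rw [fin_nat_sum τ ξ he (fun x y => ENNReal.ofReal (|f y - f x| ^ p))]
  apply H n ξ hξ
  · have := he 0
    simp at this; rw [this]; exact (h2 0).1
  · have := he (Fin.last n)
    simp at this; rw [this]; exact (h2 _).2

lemma pVar_mono {f : ℝ → ℝ} {p s t s' t' : ℝ} (hp : 0 < p) (h1 : s' ≤ s) (h2 : t ≤ t') :
    pVar f p s t ≤ pVar f p s' t' :=
  pVar_le_of fun n ξ hξ a1 a2 => sum_le_pVar f hp ξ hξ n (h1.trans a1) (a2.trans h2)

lemma pVar_add {f : ℝ → ℝ} {p s u t : ℝ} (hp : 0 < p) (h1 : s ≤ u) (h2 : u ≤ t) :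
    pVar f p s u + pVar f p u t ≤ pVar f p s t := by
  have key : ∀ (n : ℕ) (ξ : ℕ → ℝ), Monotone ξ → s ≤ ξ 0 → ξ n ≤ u →
      ∀ (m : ℕ) (η : ℕ → ℝ), Monotone η → u ≤ η 0 → η m ≤ t →
      ∑ i ∈ Finset.range n, ENNReal.ofReal (|f (ξ (i + 1)) - f (ξ i)| ^ p) +
      ∑ i ∈ Finset.range m, ENNReal.ofReal (|f (η (i + 1)) - f (η i)| ^ p) ≤ pVar f p s t := by
    intro n ξ hξ a1 a2 m η hη b1 b2
    let ζ : ℕ → ℝ := fun i => if i ≤ n then ξ i else η (i - (n + 1))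
    have hζ : Monotone ζ := by
      intro i j hij
      simp only [ζ]
      split_ifs with c1 c2
      · exact hξ hij
      · exact (hξ c1).trans (a2.trans (b1.trans (hη (by omega))))
      · omega
      · exact hη (by omega)
    have := sum_le_pVar f hp (s := s) (t := t) ζ hζ (n + 1 + m) (by simpa [ζ] using a1) (by
      simp only [ζ]
      rw [if_neg (by omega)]
      simpa using b2)
    refine le_trans ?_ this
    rw [Finset.sum_range_add, Finset.sum_range_succ]
    apply add_le_add
    · refine le_trans (le_of_eq ?_) le_self_add
      apply Finset.sum_congr rfl
      intro i hi
      rw [Finset.mem_range] at hi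
      simp only [ζ]
      rw [if_pos (by omega), if_pos (by omega)]
    · apply le_of_eq
      apply Finset.sum_congr rfl
      intro i hi
      simp only [ζ]
      rw [if_neg (by omega), if_neg (by omega)]
      congr 6 <;> omega
  by_cases hT : pVar f p s t = ⊤
  · rw [hT]; exact le_top
  have hu : pVar f p u t ≠ ⊤ := ne_top_of_le_ne_top hT (pVar_mono hp h1 le_rfl)
  rw [← ENNReal.le_sub_iff_add_le_right hu (pVar_mono hp h1 le_rfl)]
  refine pVar_le_of fun n ξ hξ a1 a2 => ?_
  have hne : ∑ i ∈ Finset.range n, ENNReal.ofReal (|f (ξ (i + 1)) - f (ξ i)| ^ p) ≠ ⊤ := by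
    simp [ENNReal.sum_eq_top]
  have hle := sum_le_pVar f hp ξ hξ n a1 (a2.trans h2)
  rw [ENNReal.le_sub_iff_add_le_right hu (pVar_mono hp h1 le_rfl), add_comm,
    ← ENNReal.le_sub_iff_add_le_right hne hle]
  refine pVar_le_of fun m η hη b1 b2 => ?_
  rw [ENNReal.le_sub_iff_add_le_right hne hle, add_comm]
  exact key n ξ hξ a1 a2 m η hη b1 b2

lemma pVar_sum {f : ℝ → ℝ} {p : ℝ} (hp : 0 < p) (ξ : ℕ → ℝ) (hξ : Monotone ξ) (n : ℕ) :
    ∑ i ∈ Finset.range n, pVar f p (ξ i) (ξ (i + 1)) ≤ pVar f p (ξ 0) (ξ n) := by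
  induction n with
  | zero => simp
  | succ n ih =>
    rw [Finset.sum_range_succ]
    exact (add_le_add_left ih _).trans (pVar_add hp (hξ (by omega)) (hξ (by omega)))

lemma pVar_sum_real {f : ℝ → ℝ} {p a b : ℝ} (hp : 0 < p) (hfin : pVar f p a b < ⊤)
    (ξ : ℕ → ℝ) (hξ : Monotone ξ) (n : ℕ) (h0 : a ≤ ξ 0) (h1 : ξ n ≤ b) :
    ∑ i ∈ Finset.range n, (pVar f p (ξ i) (ξ (i + 1))).toReal ≤ (pVar f p a b).toReal := by
  rw [← ENNReal.toReal_sum]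
  · exact ENNReal.toReal_mono hfin.ne ((pVar_sum hp ξ hξ n).trans (pVar_mono hp h0 h1))
  · intro i hi
    rw [Finset.mem_range] at hi
    exact ne_top_of_le_ne_top hfin.ne
      (pVar_mono hp (h0.trans (hξ (by omega))) ((hξ (by omega)).trans h1))

lemma VB_pVar {f : ℝ → ℝ} {p s t : ℝ} (hp : 0 < p) (hfin : pVar f p s t < ⊤) :
    VB f p s t (pVar f p s t).toReal := by
  intro n ξ hξ h0 h1
  rw [← ENNReal.ofReal_le_iff_le_toReal hfin.ne, ENNReal.ofReal_sum_of_nonneg]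
  · exact sum_le_pVar f hp ξ hξ n h0 h1
  · intro i _; positivity

lemma VB_q {g : ℝ → ℝ} {q q' s t W η : ℝ} (hq : 0 < q) (hqq : q ≤ q') (hg : VB g q s t W)
    (hη : ∀ x ∈ Icc s t, ∀ y ∈ Icc s t, |g x - g y| ≤ η) :
    VB g q' s t (η ^ (q' - q) * W) := by
  intro n ξ hξ h0 h1
  rcases n.eq_zero_or_pos with rfl | hn
  · have h := hg 0 ξ hξ h0 h1
    have := hη (ξ 0) ⟨h0, h1⟩ (ξ 0) ⟨h0, h1⟩
    simp at h this ⊢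
    positivity
  have hη0 : 0 ≤ η := (abs_nonneg _).trans
    (hη (ξ 0) ⟨h0, (hξ (by omega)).trans h1⟩ (ξ 0) ⟨h0, (hξ (by omega)).trans h1⟩)
  calc _ ≤ ∑ i ∈ Finset.range n, η ^ (q' - q) * |g (ξ (i + 1)) - g (ξ i)| ^ q := by
        apply Finset.sum_le_sum
        intro i hi
        rw [Finset.mem_range] at hi
        rw [show q' = (q' - q) + q by ring,
          Real.rpow_add_of_nonneg (abs_nonneg _) (by linarith) hq.le]
        rw [show (q' - q) + q - q = q' - q by ring]
        have := hη (ξ (i + 1)) ⟨h0.trans (hξ (by omega)), (hξ (by omega)).trans h1⟩ (ξ i)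
          ⟨h0.trans (hξ (by omega)), (hξ (by omega)).trans h1⟩
        have h' : 0 ≤ q' - q := by linarith
        gcongr
    _ = η ^ (q' - q) * ∑ i ∈ Finset.range n, |g (ξ (i + 1)) - g (ξ i)| ^ q := by
        rw [Finset.mul_sum]
    _ ≤ _ := by
        gcongr
        exact hg n ξ hξ h0 h1

lemma le_osc {f : ℝ → ℝ} {p s t V : ℝ} (hp : 0 < p) (hf : VB f p s t V) {x y : ℝ}
    (hx : x ∈ Icc s t) (hy : y ∈ Icc s t) : |f x - f y| ≤ oscNorm f s t := by
  have hV : 0 ≤ V := le_trans (by positivity) (hf.two hx hx)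
  wlog hxy : y ≤ x generalizing x y
  · rw [abs_sub_comm]; exact this hy hx (by linarith)
  rcases hxy.eq_or_lt with rfl | h
  · simp only [sub_self, abs_zero]
    apply Real.sSup_nonneg
    rintro _ ⟨_, _, _, _, _, rfl⟩
    positivity
  · apply le_csSup
    · refine ⟨V ^ (1 / p), ?_⟩
      rintro _ ⟨u, hu, v, hv, _, rfl⟩
      rw [one_div, Real.le_rpow_inv_iff_of_pos (abs_nonneg _) hV hp]
      exact hf.two hv hu
    · exact ⟨y, hy, x, hx, h, rfl⟩

lemma osc_nonneg (f : ℝ → ℝ) (s t : ℝ) : 0 ≤ oscNorm f s t := by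
  apply Real.sSup_nonneg
  rintro _ ⟨_, _, _, _, _, rfl⟩
  positivity

lemma osc_le {f : ℝ → ℝ} {s t η : ℝ} (hη : 0 ≤ η)
    (h : ∀ x ∈ Icc s t, ∀ y ∈ Icc s t, |f x - f y| ≤ η) : oscNorm f s t ≤ η := by
  apply Real.sSup_le _ hη
  rintro _ ⟨u, hu, v, hv, _, rfl⟩
  exact h v hv u hu

lemma le_sup {f : ℝ → ℝ} {p s t V : ℝ} (hp : 0 < p) (hf : VB f p s t V) {x : ℝ}
    (hx : x ∈ Icc s t) : |f x| ≤ supNorm f s t := by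
  apply le_csSup
  · refine ⟨oscNorm f s t + |f x|, ?_⟩
    rintro _ ⟨v, hv, rfl⟩
    have h1 := le_osc hp hf hv hx
    have := abs_add_le (f v - f x) (f x)
    rw [sub_add_cancel] at this
    linarith
  · exact ⟨x, hx, rfl⟩

lemma small_osc {f g : ℝ → ℝ} {a b : ℝ} (h : NoCommonDiscont f g a b) {η : ℝ} (hη : 0 < η) :
    ∃ δ > 0, ∀ s t, a ≤ s → s ≤ t → t ≤ b → t - s < δ →
      (∀ x ∈ Icc s t, ∀ y ∈ Icc s t, |f x - f y| ≤ η) ∨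
      (∀ x ∈ Icc s t, ∀ y ∈ Icc s t, |g x - g y| ≤ η) := by
  have cont : ∀ φ : ℝ → ℝ, ∀ x, ContinuousWithinAt φ (Icc a b) x → ∃ r > 0,
      ∀ u ∈ Icc a b ∩ Metric.ball x r, ∀ v ∈ Icc a b ∩ Metric.ball x r, |φ u - φ v| ≤ η := by
    intro φ x hx
    rw [Metric.continuousWithinAt_iff] at hx
    obtain ⟨r, hr, H⟩ := hx (η / 2) (by positivity)
    refine ⟨r, hr, fun u hu v hv => ?_⟩
    have h1 := H hu.1 hu.2
    have h2 := H hv.1 hv.2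
    rw [Real.dist_eq] at h1 h2
    rw [abs_lt] at h1 h2
    rw [abs_le]
    constructor <;> linarith
  have : ∀ x, ∃ r > 0, x ∈ Icc a b →
      (∀ u ∈ Icc a b ∩ Metric.ball x r, ∀ v ∈ Icc a b ∩ Metric.ball x r, |f u - f v| ≤ η) ∨
      (∀ u ∈ Icc a b ∩ Metric.ball x r, ∀ v ∈ Icc a b ∩ Metric.ball x r, |g u - g v| ≤ η) := by
    intro x
    by_cases hx : x ∈ Icc a b
    · rcases h x hx with h | h
      · obtain ⟨r, hr, H⟩ := cont f x h
        exact ⟨r, hr, fun _ => Or.inl H⟩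
      · obtain ⟨r, hr, H⟩ := cont g x h
        exact ⟨r, hr, fun _ => Or.inr H⟩
    · exact ⟨1, one_pos, fun h => absurd h hx⟩
  choose r hr H using this
  obtain ⟨δ, hδ, L⟩ := lebesgue_number_lemma_of_metric (s := Icc a b)
    (c := fun x : Icc a b => Metric.ball (x : ℝ) (r x)) isCompact_Icc
    (fun _ => Metric.isOpen_ball)
    (fun x hx => mem_iUnion.2 ⟨⟨x, hx⟩, Metric.mem_ball_self (hr x)⟩)
  refine ⟨δ, hδ, fun s t h1 h2 h3 h4 => ?_⟩
  obtain ⟨i, hi⟩ := L s ⟨h1, h2.trans h3⟩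
  have sub : ∀ x ∈ Icc s t, x ∈ Icc a b ∩ Metric.ball (i : ℝ) (r i) := by
    intro x hx
    refine ⟨⟨h1.trans hx.1, hx.2.trans h3⟩, hi ?_⟩
    rw [Metric.mem_ball, Real.dist_eq, abs_lt]
    constructor <;> linarith [hx.1, hx.2]
  rcases H i i.2 with H | H
  · exact Or.inl fun x hx y hy => H x (sub x hx) y (sub y hy)
  · exact Or.inr fun x hx y hy => H x (sub x hx) y (sub y hy)


lemma amgm {V W l : ℝ} (hV : 0 ≤ V) (hW : 0 ≤ W) (h0 : 0 ≤ l) (h1 : l ≤ 1) :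
    V ^ (1 - l) * W ^ l ≤ V + W := by
  have := Real.geom_mean_le_arith_mean2_weighted (by linarith : 0 ≤ 1 - l) h0 hV hW (by ring)
  nlinarith

lemma alpha_pos {p q : ℝ} (hp : 1 < p) (hpq : 1 / p + 1 / q > 1) : 0 < 1 + p / q - p := by
  have : p * (1 / p + 1 / q) > p * 1 := by gcongr
  have e : p * (1 / p + 1 / q) = 1 + p / q := by field_simp
  linarith

/-- Remark 5 (first estimate): `q`-variation bound for the indefinite
Riemann–Stieltjes integral `t ↦ ∫_a^t f dg`. -/
theorem indefinite_rs_integral_qvar_bound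
    (p q : ℝ) (hp : 1 < p) (hq : 1 < q) (hpq : 1 / p + 1 / q > 1) :
    ∃ C : ℝ, 0 < C ∧ ∀ (a b : ℝ), a < b → ∀ f g : ℝ → ℝ,
      NoCommonDiscont f g a b → pVar f p a b < ⊤ → pVar g q a b < ⊤ →
      ∃ Y : ℝ → ℝ, (∀ t ∈ Set.Icc a b, RSIntegral f g a t (Y t)) ∧
        pVarNorm Y q a b ≤
          (C * pVarNorm f p a b ^ (p - p / q) * oscNorm f a b ^ (1 + p / q - p)
              + supNorm f a b) * pVarNorm g q a b := by
  obtain ⟨C₁, hC₁, H₁⟩ := young hp hq hpq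
  refine ⟨C₁, hC₁, ?_⟩
  intro a b hab f g hnc hf hg
  have hp0 : 0 < p := by linarith
  have hq0 : 0 < q := by linarith
  obtain ⟨q', hqq, hpq'⟩ : ∃ q', q < q' ∧ 1 / p + 1 / q' > 1 := by
    have h1 : 1 - 1 / p < 1 / q := by linarith
    have h2 : 0 < 1 - 1 / p := by
      have : 1 / p < 1 := by rw [div_lt_one (by linarith)]; exact hp
      linarith
    obtain ⟨x, hx1, hx2⟩ := exists_between h1
    refine ⟨1 / x, ?_, by rw [one_div_one_div]; linarith⟩
    rw [lt_one_div hq0 (by linarith)]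
    exact hx2
  have hq' : 1 < q' := by linarith
  have hq'0 : 0 < q' := by linarith
  obtain ⟨C₂, hC₂, H₂⟩ := young hp hq' hpq'
  have hα₁ := alpha_pos hp hpq
  have hα₂ := alpha_pos hp hpq'
  have hl₁ : 0 < 1 / q := by positivity
  have hl₂ : 0 < 1 / q' := by positivity
  have hl₁' : 1 / q < 1 := by rw [div_lt_one (by linarith)]; exact hq
  have hl₂' : 1 / q' < 1 := by rw [div_lt_one (by linarith)]; exact hq'
  let V : ℝ → ℝ → ℝ := fun s t => (pVar f p s t).toReal
  let W : ℝ → ℝ → ℝ := fun s t => (pVar g q s t).toReal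
  have hV0 : ∀ s t, 0 ≤ V s t := fun _ _ => ENNReal.toReal_nonneg
  have hW0 : ∀ s t, 0 ≤ W s t := fun _ _ => ENNReal.toReal_nonneg
  have hVB : ∀ s t, a ≤ s → t ≤ b → VB f p s t (V s t) := fun s t h1 h2 =>
    VB_pVar hp0 ((pVar_mono hp0 h1 h2).trans_lt hf)
  have hWB : ∀ s t, a ≤ s → t ≤ b → VB g q s t (W s t) := fun s t h1 h2 =>
    VB_pVar hq0 ((pVar_mono hq0 h1 h2).trans_lt hg)
  let κ₁ : ℝ → ℝ → ℝ := fun s t =>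
    C₁ * V s t ^ (1 - 1 / q) * oscNorm f s t ^ (1 + p / q - p) * W s t ^ (1 / q)
  let κ₂ : ℝ → ℝ → ℝ := fun s t =>
    C₂ * V s t ^ (1 - 1 / q') * oscNorm f s t ^ (1 + p / q' - p) *
      (oscNorm g s t ^ (q' - q) * W s t) ^ (1 / q')
  obtain ⟨Y, hYa, hY⟩ := exists_Y hab.le f g (fun s t => min (κ₁ s t) (κ₂ s t)) (by
    intro s t h1 h2 h3 n ξ hξ e0 e1 c hc
    have v := hVB s t h1 h3
    have w := hWB s t h1 h3
    have of := osc_nonneg f s t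
    have og := osc_nonneg g s t
    apply le_min
    · exact H₁ f g s t _ _ _ (hV0 s t) (hW0 s t) of v w
        (fun x hx y hy => le_osc hp0 v hx hy) n ξ hξ e0 e1 c hc
    · exact H₂ f g s t _ _ _ (hV0 s t) (mul_nonneg (by positivity) (hW0 s t)) of v
        (VB_q hq0 hqq.le w (fun x hx y hy => le_osc hq0 w hx hy))
        (fun x hx y hy => le_osc hp0 v hx hy) n ξ hξ e0 e1 c hc)
  have hoscm : ∀ s t, a ≤ s → t ≤ b → oscNorm f s t ≤ oscNorm f a b := fun s t h1 h2 =>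
    osc_le (osc_nonneg f a b) fun x hx y hy => le_osc hp0 (hVB a b le_rfl le_rfl)
      ⟨h1.trans hx.1, hx.2.trans h2⟩ ⟨h1.trans hy.1, hy.2.trans h2⟩
  have hO := osc_nonneg f a b
  have rate : ∀ ε > 0, ∃ δ > 0, ∀ s t, a ≤ s → s ≤ t → t ≤ b → t - s < δ →
      min (κ₁ s t) (κ₂ s t) ≤ ε * (V s t + W s t) := by
    intro ε hε
    obtain ⟨η, hη, e1, e2⟩ : ∃ η > 0, C₁ * η ^ (1 + p / q - p) ≤ ε ∧
        C₂ * oscNorm f a b ^ (1 + p / q' - p) * (η ^ (q' - q)) ^ (1 / q') ≤ ε := by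
      have t1 : Tendsto (fun η : ℝ => C₁ * η ^ (1 + p / q - p)) (nhdsWithin 0 (Ioi 0)) (nhds 0) := by
        have := ((Real.continuous_rpow_const hα₁.le).const_mul C₁).tendsto 0
        rw [Real.zero_rpow hα₁.ne', mul_zero] at this
        exact this.mono_left nhdsWithin_le_nhds
      have t2 : Tendsto (fun η : ℝ => C₂ * oscNorm f a b ^ (1 + p / q' - p) *
          (η ^ (q' - q)) ^ (1 / q')) (nhdsWithin 0 (Ioi 0)) (nhds 0) := by
        have hd : 0 < q' - q := by linarith
        have := (((Real.continuous_rpow_const hl₂.le).comp (Real.continuous_rpow_const hd.le)).const_mul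
          (C₂ * oscNorm f a b ^ (1 + p / q' - p))).tendsto 0
        simp only [Function.comp_def] at this
        rw [Real.zero_rpow hd.ne', Real.zero_rpow hl₂.ne', mul_zero] at this
        exact this.mono_left nhdsWithin_le_nhds
      have ev := ((t1.eventually (ge_mem_nhds hε)).and (t2.eventually (ge_mem_nhds hε))).and
        self_mem_nhdsWithin
      obtain ⟨η, ⟨h1, h2⟩, h3⟩ := ev.exists
      exact ⟨η, h3, h1, h2⟩
    obtain ⟨δ, hδ, S⟩ := small_osc hnc hη
    refine ⟨δ, hδ, fun s t h1 h2 h3 h4 => ?_⟩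
    have v0 := hV0 s t
    have w0 := hW0 s t
    have of := osc_nonneg f s t
    have og := osc_nonneg g s t
    rcases S s t h1 h2 h3 h4 with h | h
    · apply (min_le_left _ _).trans
      have ho := osc_le hη.le h
      calc κ₁ s t ≤ C₁ * V s t ^ (1 - 1 / q) * η ^ (1 + p / q - p) * W s t ^ (1 / q) := by
            simp only [κ₁]; gcongr
        _ = (C₁ * η ^ (1 + p / q - p)) * (V s t ^ (1 - 1 / q) * W s t ^ (1 / q)) := by ring
        _ ≤ ε * (V s t + W s t) := by
            gcongr
            exact amgm v0 w0 hl₁.le hl₁'.le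
    · apply (min_le_right _ _).trans
      have ho := osc_le hη.le h
      have ho' := hoscm s t h1 h3
      have hd : 0 ≤ q' - q := by linarith
      calc κ₂ s t ≤ C₂ * V s t ^ (1 - 1 / q') * oscNorm f a b ^ (1 + p / q' - p) *
              (η ^ (q' - q) * W s t) ^ (1 / q') := by
            simp only [κ₂]; gcongr
        _ = (C₂ * oscNorm f a b ^ (1 + p / q' - p) * (η ^ (q' - q)) ^ (1 / q')) *
              (V s t ^ (1 - 1 / q') * W s t ^ (1 / q')) := by
            rw [Real.mul_rpow (by positivity) w0]; ring
        _ ≤ ε * (V s t + W s t) := by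
            gcongr
            exact amgm v0 w0 hl₂.le hl₂'.le
  refine ⟨Y, ?_, ?_⟩
  · intro c hc ε hε
    have hM : 0 < V a b + W a b + 1 := by linarith [hV0 a b, hW0 a b]
    obtain ⟨δ, hδ, R⟩ := rate (ε / (V a b + W a b + 1)) (by positivity)
    refine ⟨δ, hδ, fun n τ ξ hτ h0 h1 hξ hmesh => ?_⟩
    obtain ⟨ζ, hζ, he⟩ := fin_nat τ hτ
    have z0 : ζ 0 = a := by rw [← h0, ← he]; simp
    have z1 : ζ n = c := by rw [← h1, ← he]; simp
    have mem : ∀ i, τ i ∈ Icc a b := fun i =>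
      ⟨by rw [← h0]; exact hτ.monotone (Fin.zero_le _),
        le_trans (by rw [← h1]; exact hτ.monotone (Fin.le_last _)) hc.2⟩
    have tel : ∑ i : Fin n, (Y (τ i.succ) - Y (τ i.castSucc)) = Y c := by
      rw [fin_nat_sum τ ζ he (fun x y => Y y - Y x), Finset.sum_range_sub (fun i => Y (ζ i)), z0, z1,
        hYa, sub_zero]
    rw [← tel, ← Finset.sum_sub_distrib]
    calc _ ≤ ∑ i : Fin n, |f (ξ i) * (g (τ i.succ) - g (τ i.castSucc)) -
            (Y (τ i.succ) - Y (τ i.castSucc))| := Finset.abs_sum_le_sum_abs _ _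
      _ ≤ ∑ i : Fin n, ε / (V a b + W a b + 1) *
            (V (τ i.castSucc) (τ i.succ) + W (τ i.castSucc) (τ i.succ)) := by
          apply Finset.sum_le_sum
          intro i _
          have hle : τ i.castSucc ≤ τ i.succ := hτ.monotone (Fin.castSucc_lt_succ).le
          rw [abs_sub_comm]
          exact (hY _ _ (mem _).1 hle (mem _).2 (ξ i) (hξ i)).trans
            (R _ _ (mem _).1 hle (mem _).2 (hmesh i))
      _ = ε / (V a b + W a b + 1) * (∑ i ∈ Finset.range n, V (ζ i) (ζ (i + 1)) +
            ∑ i ∈ Finset.range n, W (ζ i) (ζ (i + 1))) := by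
          rw [← Finset.mul_sum, fin_nat_sum τ ζ he (fun x y => V x y + W x y),
            Finset.sum_add_distrib]
      _ ≤ ε / (V a b + W a b + 1) * (V a b + W a b) := by
          gcongr
          · exact pVar_sum_real hp0 hf ζ hζ n z0.ge (z1.le.trans hc.2)
          · exact pVar_sum_real hq0 hg ζ hζ n z0.ge (z1.le.trans hc.2)
      _ < ε := by
          rw [div_mul_eq_mul_div, div_lt_iff₀ hM]
          nlinarith
  · have e1 : pVarNorm f p a b ^ (p - p / q) = V a b ^ (1 - 1 / q) := by
      unfold pVarNorm
      rw [← Real.rpow_mul ENNReal.toReal_nonneg]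
      congr 1
      field_simp
    rw [e1]
    have hs : 0 ≤ supNorm f a b :=
      (abs_nonneg _).trans (le_sup hp0 (hVB a b le_rfl le_rfl) ⟨le_rfl, hab.le⟩)
    have va := hV0 a b
    set K := C₁ * V a b ^ (1 - 1 / q) * oscNorm f a b ^ (1 + p / q - p) + supNorm f a b with hK
    have hK0 : 0 ≤ K := by positivity
    have main : pVar Y q a b ≤ ENNReal.ofReal (K ^ q * W a b) := by
      apply pVar_le_of
      intro n ξ hξ h0 h1
      rw [← ENNReal.ofReal_sum_of_nonneg (fun i _ => by positivity)]
      apply ENNReal.ofReal_le_ofReal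
      calc _ ≤ ∑ i ∈ Finset.range n, K ^ q * W (ξ i) (ξ (i + 1)) := by
            apply Finset.sum_le_sum
            intro i hi
            rw [Finset.mem_range] at hi
            have i0 : a ≤ ξ i := h0.trans (hξ (by omega))
            have i1 : ξ (i + 1) ≤ b := (hξ (by omega)).trans h1
            have i2 : ξ i ≤ ξ (i + 1) := hξ (by omega)
            have w0 := hW0 (ξ i) (ξ (i + 1))
            have v0 := hV0 (ξ i) (ξ (i + 1))
            have of := osc_nonneg f (ξ i) (ξ (i + 1))
            have hle := (hY _ _ i0 i2 i1 (ξ i) ⟨le_rfl, i2⟩).trans (min_le_left _ _)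
            have hg1 : |g (ξ (i + 1)) - g (ξ i)| ≤ W (ξ i) (ξ (i + 1)) ^ (1 / q) := by
              rw [one_div, Real.le_rpow_inv_iff_of_pos (abs_nonneg _) w0 hq0]
              exact (hWB _ _ i0 i1).two ⟨i2, le_rfl⟩ ⟨le_rfl, i2⟩
            have hk : κ₁ (ξ i) (ξ (i + 1)) ≤ C₁ * V a b ^ (1 - 1 / q) *
                oscNorm f a b ^ (1 + p / q - p) * W (ξ i) (ξ (i + 1)) ^ (1 / q) := by
              have := hoscm _ _ i0 i1
              have hvv : V (ξ i) (ξ (i + 1)) ≤ V a b :=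
                ENNReal.toReal_mono hf.ne (pVar_mono hp0 i0 i1)
              have : 0 ≤ 1 - 1 / q := by linarith
              simp only [κ₁]
              gcongr
            have hf1 := le_sup hp0 (hVB a b le_rfl le_rfl) ⟨i0, i2.trans i1⟩
            have h2 : |f (ξ i) * (g (ξ (i + 1)) - g (ξ i))| ≤
                supNorm f a b * W (ξ i) (ξ (i + 1)) ^ (1 / q) := by
              rw [abs_mul]; gcongr
            have h3 : |Y (ξ (i + 1)) - Y (ξ i)| ≤ K * W (ξ i) (ξ (i + 1)) ^ (1 / q) := by
              have := abs_add_le (Y (ξ (i + 1)) - Y (ξ i) - f (ξ i) * (g (ξ (i + 1)) - g (ξ i)))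
                (f (ξ i) * (g (ξ (i + 1)) - g (ξ i)))
              rw [sub_add_cancel] at this
              rw [hK, add_mul]
              linarith
            calc _ ≤ (K * W (ξ i) (ξ (i + 1)) ^ (1 / q)) ^ q := by gcongr
              _ = _ := by
                rw [Real.mul_rpow hK0 (by positivity), ← Real.rpow_mul w0,
                  one_div_mul_cancel hq0.ne', Real.rpow_one]
        _ = K ^ q * ∑ i ∈ Finset.range n, W (ξ i) (ξ (i + 1)) := by rw [Finset.mul_sum]
        _ ≤ _ := by
            gcongr
            exact pVar_sum_real hq0 hg ξ hξ n h0 h1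
    have wa := hW0 a b
    have main2 : (pVar Y q a b).toReal ≤ K ^ q * W a b :=
      ENNReal.toReal_le_of_le_ofReal (by positivity) main
    calc pVarNorm Y q a b ≤ (K ^ q * W a b) ^ (1 / q) := by
          unfold pVarNorm; gcongr
      _ = K * pVarNorm g q a b := by
          rw [Real.mul_rpow (by positivity) wa, ← Real.rpow_mul hK0, mul_one_div_cancel hq0.ne',
            Real.rpow_one]
          rfl
end

section
/- For all p > 1 and q > 1 with 1/p + 1/q > 1, there exists a constant C_{p,q} > 0, depending only on p and q, such that: for every a < b and all functions f, g : [a;b] → ℝ with no common points of discontinuity, with f of finite p-variation and g of finite q-variation on [a;b], the indefinite Riemann–Stieltjes integral t ↦ ∫_a^t f dg (t ∈ [a;b]) satisfies ‖∫_a^· f dg‖_{q-var,[a;b]} ≤ ( C_{p,q} · ‖f‖_{p-var,[a;b]} + ‖f‖_{∞,[a;b]} ) · ‖g‖_{q-var,[a;b]}. -/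
open Filter Set

lemma discreteA (θ K : ℝ) (hθ : 1 < θ) (hK : 0 ≤ K) (M N : ℕ) (w E : ℕ → ℕ → ℝ)
    (hw0 : ∀ i j, M ≤ i → i ≤ j → j ≤ N → 0 ≤ w i j)
    (hws : ∀ i j k, M ≤ i → i ≤ j → j ≤ k → k ≤ N → w i j + w j k ≤ w i k)
    (hE0 : ∀ i, E i i = 0) (hE1 : ∀ i, E i (i+1) = 0)
    (hE : ∀ i j k, M ≤ i → i ≤ j → j ≤ k → k ≤ N →
      |E i k| ≤ |E i j| + |E j k| + K * (w i k) ^ θ) :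
    ∀ d m n, n - m = d → M ≤ m → m ≤ n → n ≤ N →
      |E m n| ≤ 2 / (1 - 2 ^ (1 - θ)) * K * (w m n) ^ θ := by
  have h2 : (2:ℝ) ^ (1 - θ) < 1 := Real.rpow_lt_one_of_one_lt_of_neg (by norm_num) (by linarith)
  have h2p : (0:ℝ) < 2 ^ (1 - θ) := by positivity
  set C := 2 / (1 - (2:ℝ) ^ (1 - θ)) with hC
  have hC0 : 0 < C := div_pos (by norm_num) (by linarith)
  have hCeq : C = 2 ^ (1 - θ) * C + 2 := by
    have : (1 - (2:ℝ) ^ (1 - θ)) ≠ 0 := by linarith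
    rw [hC]; field_simp; ring
  intro d
  induction d using Nat.strong_induction_on with
  | _ d ih =>
  intro m n hd hMm hmn hnN
  have hwmn := hw0 m n hMm hmn hnN
  rcases hmn.eq_or_lt with rfl | hlt
  · rw [hE0]; simp; positivity
  have hself : ∀ i, M ≤ i → i ≤ N → w i i = 0 := fun i h1 h2 => by
    have := hws i i i h1 le_rfl le_rfl h2
    have := hw0 i i h1 le_rfl h2
    linarith
  classical
  -- largest j
  let P : ℕ → Prop := fun j => m ≤ j ∧ w m j ≤ w m n / 2
  have hPm : P m := ⟨le_rfl, by rw [hself m hMm (by omega)]; linarith⟩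
  set j := Nat.findGreatest P (n-1) with hj
  have hPj : P j := Nat.findGreatest_spec (P := P) (m := m) (by omega) hPm
  have hjn : j ≤ n - 1 := Nat.findGreatest_le _
  have hmj : m ≤ j := hPj.1
  have hwj : w m j ≤ w m n / 2 := hPj.2
  have hwj' : w (j+1) n ≤ w m n / 2 := by
    rcases (show j + 1 ≤ n by omega).eq_or_lt with h | h
    · rw [h, hself n (by omega) hnN]; linarith
    · have hnP : ¬ P (j+1) := Nat.findGreatest_is_greatest (P := P) (n := n-1) (by omega) (by omega)
      have : w m n / 2 < w m (j+1) := by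
        by_contra hc
        exact hnP ⟨by omega, not_lt.mp hc⟩
      have := hws m (j+1) n hMm (by omega) (by omega) hnN
      linarith
  have e1 := hE m j n hMm hmj (by omega) hnN
  have e2 := hE j (j+1) n (by omega) (by omega) (by omega) hnN
  rw [hE1, abs_zero, zero_add] at e2
  have i1 := ih (j - m) (by omega) m j rfl hMm hmj (by omega)
  have i2 := ih (n - (j+1)) (by omega) (j+1) n rfl (by omega) (by omega) hnN
  have hhalf : ∀ x, 0 ≤ x → x ≤ w m n / 2 → C * K * x ^ θ ≤ C * K * (w m n ^ θ * 2 ^ (-θ)) := by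
    intro x hx hx2
    have : x ^ θ ≤ (w m n / 2) ^ θ := Real.rpow_le_rpow hx hx2 (by linarith)
    rw [Real.div_rpow hwmn (by norm_num), div_eq_mul_inv, ← Real.rpow_neg (by norm_num)] at this
    gcongr
  have k1 := hhalf _ (hw0 m j hMm hmj (by omega)) hwj
  have k2 := hhalf _ (hw0 (j+1) n (by omega) (by omega) hnN) hwj'
  have k3 : K * w j n ^ θ ≤ K * w m n ^ θ := by
    have := hws m j n hMm hmj (by omega) hnN
    have h0 := hw0 m j hMm hmj (by omega)
    have h1 := hw0 j n (by omega) (by omega) hnN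
    gcongr
    linarith
  have h2e : (2:ℝ) ^ (1 - θ) = 2 * 2 ^ (-θ) := by
    rw [sub_eq_add_neg, Real.rpow_add (by norm_num), Real.rpow_one]
  have : C * K * w m n ^ θ = 2 * (C * K * (w m n ^ θ * 2 ^ (-θ))) + 2 * (K * w m n ^ θ) := by
    calc C * K * w m n ^ θ = (2 ^ (1 - θ) * C + 2) * K * w m n ^ θ := by rw [← hCeq]
      _ = _ := by rw [h2e]; ring
  linarith

/-- sums along chains -/
inductive Reach (f : ℝ → ℝ) (p s : ℝ) : ℝ → ℝ → Prop
  | base : Reach f p s s 0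
  | step {x y v : ℝ} : Reach f p s x v → x ≤ y → Reach f p s y (v + |f y - f x| ^ p)

lemma Reach.concat {f : ℝ → ℝ} {p s u t v v' : ℝ} (h : Reach f p s u v) (h' : Reach f p u t v') :
    Reach f p s t (v + v') := by
  induction h' with
  | base => simpa using h
  | step _ hxy ih => rw [← add_assoc]; exact Reach.step ih hxy

lemma Reach.le {f : ℝ → ℝ} {p s t v : ℝ} (h : Reach f p s t v) : s ≤ t := by
  induction h with
  | base => exact le_rfl
  | step _ hxy ih => exact ih.trans hxy

lemma Reach.nonneg {f : ℝ → ℝ} {p s t v : ℝ} (h : Reach f p s t v) : 0 ≤ v := by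
  induction h with
  | base => exact le_rfl
  | step _ hxy ih => positivity

lemma Reach.fin {f : ℝ → ℝ} {p s t v : ℝ} (hp : 0 < p) (h : Reach f p s t v) :
    ∃ (n : ℕ) (τ : Fin (n+1) → ℝ), StrictMono τ ∧ (∀ i, τ i ∈ Set.Icc s t) ∧
      τ (Fin.last n) = t ∧
      ENNReal.ofReal v ≤ ∑ i : Fin n, ENNReal.ofReal (|f (τ i.succ) - f (τ i.castSucc)| ^ p) := by
  induction h with
  | base => exact ⟨0, fun _ => s, by intro i j hij; exact absurd hij (by omega), by simp, rfl, by simp⟩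
  | @step x y v hr hxy ih =>
    obtain ⟨n, τ, hτ, hmem, hlast, hsum⟩ := ih
    rcases hxy.eq_or_lt with rfl | hlt
    · refine ⟨n, τ, hτ, hmem, hlast, ?_⟩
      simpa [Real.zero_rpow hp.ne'] using hsum
    · refine ⟨n+1, Fin.snoc τ y, ?_, ?_, by simp, ?_⟩
      · rw [Fin.strictMono_iff_lt_succ]
        intro i
        induction i using Fin.lastCases with
        | last => simp [Fin.succ_last, hlast, hlt]
        | cast i =>
          rw [Fin.snoc_castSucc, ← Fin.castSucc_succ, Fin.snoc_castSucc]
          exact hτ i.castSucc_lt_succ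
      · intro i
        induction i using Fin.lastCases with
        | last => simp [hr.le.trans hxy]
        | cast i => simpa using ⟨(hmem i).1, (hmem i).2.trans hxy⟩
      · rw [Fin.sum_univ_castSucc]
        rw [ENNReal.ofReal_add hr.nonneg (by positivity)]
        refine add_le_add (hsum.trans (le_of_eq ?_)) (le_of_eq ?_)
        · refine Finset.sum_congr rfl fun i _ => ?_
          rw [Fin.snoc_castSucc, ← Fin.castSucc_succ, Fin.snoc_castSucc]
        · simp [Fin.succ_last, hlast]

lemma Reach.le_pVar {f : ℝ → ℝ} {p s t v a b : ℝ} (hp : 0 < p) (h : Reach f p s t v)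
    (has : a ≤ s) (htb : t ≤ b) (hf : pVar f p a b < ⊤) : v ≤ (pVar f p a b).toReal := by
  obtain ⟨n, τ, hτ, hmem, -, hsum⟩ := h.fin hp
  rw [← ENNReal.ofReal_le_iff_le_toReal hf.ne]
  refine hsum.trans ?_
  unfold pVar
  exact le_iSup_of_le n <| le_iSup_of_le τ <| le_iSup_of_le hτ <|
    le_iSup_of_le (fun i => ⟨has.trans (hmem i).1, (hmem i).2.trans htb⟩) le_rfl

noncomputable def FV (f : ℝ → ℝ) (p s t : ℝ) : ℝ := sSup {v | Reach f p s t v}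

lemma Reach.bdd {f : ℝ → ℝ} {p s t a b : ℝ} (hp : 0 < p)
    (has : a ≤ s) (htb : t ≤ b) (hf : pVar f p a b < ⊤) : BddAbove {v | Reach f p s t v} :=
  ⟨_, fun _ hv => Reach.le_pVar hp hv has htb hf⟩

lemma Reach.one {f : ℝ → ℝ} {p s t : ℝ} (h : s ≤ t) : Reach f p s t (|f t - f s| ^ p) := by
  simpa using Reach.step (Reach.base (f := f) (p := p) (s := s)) h

lemma FV_le {f : ℝ → ℝ} {p s t a b : ℝ} (hp : 0 < p) (hst : s ≤ t)
    (has : a ≤ s) (htb : t ≤ b) (hf : pVar f p a b < ⊤) : FV f p s t ≤ (pVar f p a b).toReal :=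
  csSup_le ⟨_, Reach.one hst⟩ fun _ hv => Reach.le_pVar hp hv has htb hf

lemma FV_ge {f : ℝ → ℝ} {p s t a b : ℝ} (hp : 0 < p) (hst : s ≤ t)
    (has : a ≤ s) (htb : t ≤ b) (hf : pVar f p a b < ⊤) : |f t - f s| ^ p ≤ FV f p s t :=
  le_csSup (Reach.bdd hp has htb hf) (Reach.one hst)

lemma FV_nonneg {f : ℝ → ℝ} {p s t : ℝ} : 0 ≤ FV f p s t :=
  Real.sSup_nonneg fun _ hv => Reach.nonneg hv

lemma FV_add {f : ℝ → ℝ} {p s u t a b : ℝ} (hp : 0 < p) (hsu : s ≤ u) (hut : u ≤ t)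
    (has : a ≤ s) (htb : t ≤ b) (hf : pVar f p a b < ⊤) :
    FV f p s u + FV f p u t ≤ FV f p s t := by
  rw [← le_sub_iff_add_le]
  refine csSup_le ⟨_, Reach.one hsu⟩ fun v hv => ?_
  rw [le_sub_comm]
  refine csSup_le ⟨_, Reach.one hut⟩ fun v' hv' => ?_
  rw [le_sub_iff_add_le, add_comm]
  exact le_csSup (Reach.bdd hp has htb hf) (Reach.concat hv hv')

lemma FV_mono {f : ℝ → ℝ} {p s t s' t' a b : ℝ} (hp : 0 < p) (h1 : s ≤ s') (h2 : s' ≤ t')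
    (h3 : t' ≤ t) (has : a ≤ s) (htb : t ≤ b) (hf : pVar f p a b < ⊤) :
    FV f p s' t' ≤ FV f p s t := by
  have e1 := FV_add hp h1 (h2.trans h3) has htb hf
  have e2 := FV_add hp h2 h3 (has.trans h1) htb hf
  have := FV_nonneg (f := f) (p := p) (s := s) (t := s')
  have := FV_nonneg (f := f) (p := p) (s := t') (t := t)
  linarith

lemma FV_diff {f : ℝ → ℝ} {p s t x y a b : ℝ} (hp : 0 < p)
    (hx : x ∈ Set.Icc s t) (hy : y ∈ Set.Icc s t)
    (has : a ≤ s) (htb : t ≤ b) (hf : pVar f p a b < ⊤) :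
    |f y - f x| ≤ FV f p s t ^ (1/p) := by
  wlog hxy : x ≤ y generalizing x y
  · rw [abs_sub_comm]; exact this hy hx (by linarith)
  rw [one_div, Real.le_rpow_inv_iff_of_pos (abs_nonneg _) FV_nonneg hp]
  exact (FV_ge hp hxy (has.trans hx.1) (hy.2.trans htb) hf).trans
    (FV_mono hp hx.1 hxy hy.2 has htb hf)

lemma holder2 {α β F1 F2 G1 G2 : ℝ} (hα : 0 < α) (hβ : 0 < β) (hab : α + β = 1)
    (hF1 : 0 ≤ F1) (hF2 : 0 ≤ F2) (hG1 : 0 ≤ G1) (hG2 : 0 ≤ G2) :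
    F1 ^ α * G1 ^ β + F2 ^ α * G2 ^ β ≤ (F1 + F2) ^ α * (G1 + G2) ^ β := by
  rcases (add_nonneg hF1 hF2).eq_or_lt with h | hF
  · have h1 : F1 = 0 := by linarith
    have h2 : F2 = 0 := by linarith
    simp [h1, h2, Real.zero_rpow hα.ne']
  rcases (add_nonneg hG1 hG2).eq_or_lt with h | hG
  · have h1 : G1 = 0 := by linarith
    have h2 : G2 = 0 := by linarith
    simp [h1, h2, Real.zero_rpow hβ.ne']
  have e1 := Real.geom_mean_le_arith_mean2_weighted hα.le hβ.le
    (div_nonneg hF1 hF.le) (div_nonneg hG1 hG.le) hab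
  have e2 := Real.geom_mean_le_arith_mean2_weighted hα.le hβ.le
    (div_nonneg hF2 hF.le) (div_nonneg hG2 hG.le) hab
  rw [Real.div_rpow hF1 hF.le, Real.div_rpow hG1 hG.le] at e1
  rw [Real.div_rpow hF2 hF.le, Real.div_rpow hG2 hG.le] at e2
  have hFp : 0 < (F1 + F2) ^ α := Real.rpow_pos_of_pos hF _
  have hGp : 0 < (G1 + G2) ^ β := Real.rpow_pos_of_pos hG _
  have e3 : α * (F1 / (F1 + F2)) + β * (G1 / (G1 + G2)) +
      (α * (F2 / (F1 + F2)) + β * (G2 / (G1 + G2))) = 1 := by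
    field_simp
    linear_combination (F1 + F2) * (G1 + G2) * hab
  have e4 : F1 ^ α / (F1 + F2) ^ α * (G1 ^ β / (G1 + G2) ^ β) +
      F2 ^ α / (F1 + F2) ^ α * (G2 ^ β / (G1 + G2) ^ β) ≤ 1 := by linarith
  have e5 : F1 ^ α / (F1 + F2) ^ α * (G1 ^ β / (G1 + G2) ^ β) +
      F2 ^ α / (F1 + F2) ^ α * (G2 ^ β / (G1 + G2) ^ β) =
      (F1 ^ α * G1 ^ β + F2 ^ α * G2 ^ β) / ((F1 + F2) ^ α * (G1 + G2) ^ β) := by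
    field_simp
  rw [e5, div_le_one (by positivity)] at e4
  exact e4

def GoodK (f g : ℝ → ℝ) (w : ℝ → ℝ → ℝ) (θ K s t : ℝ) : Prop :=
  0 ≤ K ∧ ∀ x y z, s ≤ x → x ≤ y → y ≤ z → z ≤ t → |f y - f x| * |g z - g y| ≤ K * w x z ^ θ

lemma sewFin (a b : ℝ) (hab : a ≤ b) (f g : ℝ → ℝ) (w : ℝ → ℝ → ℝ) (θ : ℝ) (hθ : 1 < θ)
    (hw0 : ∀ s t, a ≤ s → s ≤ t → t ≤ b → 0 ≤ w s t)
    (hws : ∀ s u t, a ≤ s → s ≤ u → u ≤ t → t ≤ b → w s u + w u t ≤ w s t)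
    (D : Finset ℝ) (hD : ∀ x ∈ D, x ∈ Set.Icc a b) :
    ∃ Y : ℝ → ℝ, ∀ s t K, s ∈ D → t ∈ D → s ≤ t → GoodK f g w θ K s t →
      |Y t - Y s - f s * (g t - g s)| ≤ 2 / (1 - 2 ^ (1 - θ)) * K * w s t ^ θ := by
  classical
  obtain ⟨τ, hmono, hmem, hsurj⟩ : ∃ τ : ℕ → ℝ, Monotone τ ∧ (∀ k, τ k ∈ Set.Icc a b) ∧
      ∀ x ∈ D, ∃ k, τ k = x := by
    refine ⟨fun k => if h : k < D.card then D.orderEmbOfFin rfl ⟨k, h⟩ else b, ?_, ?_, ?_⟩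
    · intro i j hij
      dsimp only
      split_ifs with h1 h2 h3
      · exact (D.orderEmbOfFin rfl).monotone (by simpa using hij)
      · exact (hD _ (D.orderEmbOfFin_mem rfl _)).2
      · omega
      · exact le_rfl
    · intro k
      dsimp only
      split_ifs with h1
      · exact hD _ (D.orderEmbOfFin_mem rfl _)
      · exact ⟨hab, le_rfl⟩
    · intro x hx
      have : x ∈ Set.range (D.orderEmbOfFin rfl) := by
        rw [Finset.range_orderEmbOfFin]; exact hx
      obtain ⟨⟨k, hk⟩, rfl⟩ := this
      exact ⟨k, by simp [hk]⟩
  choose! κ hκ using hsurj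
  let S : ℕ → ℝ := fun n => ∑ k ∈ Finset.range n, f (τ k) * (g (τ (k+1)) - g (τ k))
  refine ⟨fun x => S (κ x), ?_⟩
  intro s t K hs ht hst hK
  rcases hst.eq_or_lt with rfl | hlt
  · have := hw0 s s (hD s hs).1 le_rfl (hD s hs).2
    have h2 : (2:ℝ) ^ (1 - θ) < 1 :=
      Real.rpow_lt_one_of_one_lt_of_neg (by norm_num) (by linarith)
    have h3 : 0 ≤ 2 / (1 - (2:ℝ) ^ (1 - θ)) := div_nonneg (by norm_num) (by linarith)
    have := hK.1
    simp
    positivity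
  have hk : κ s ≤ κ t := by
    by_contra hc
    have := hmono (not_le.mp hc).le
    rw [hκ s hs, hκ t ht] at this
    linarith
  have key := discreteA θ K hθ hK.1 (κ s) (κ t) (fun i j => w (τ i) (τ j))
    (fun i j => S j - S i - f (τ i) * (g (τ j) - g (τ i)))
    (fun i j _ hij _ => hw0 _ _ (hmem i).1 (hmono hij) (hmem j).2)
    (fun i j k _ hij hjk _ => hws _ _ _ (hmem i).1 (hmono hij) (hmono hjk) (hmem k).2)
    (fun i => by simp) (fun i => by simp [S, Finset.sum_range_succ])
    (by
      intro i j k hi hij hjk hkn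
      have := hK.2 (τ i) (τ j) (τ k) (by rw [← hκ s hs]; exact hmono hi) (hmono hij) (hmono hjk)
        (by rw [← hκ t ht]; exact hmono hkn)
      rw [← abs_mul] at this
      have e : S k - S i - f (τ i) * (g (τ k) - g (τ i)) =
        (S j - S i - f (τ i) * (g (τ j) - g (τ i))) + (S k - S j - f (τ j) * (g (τ k) - g (τ j)))
          + (f (τ j) - f (τ i)) * (g (τ k) - g (τ j)) := by ring
      rw [e]
      refine (abs_add_le _ _).trans (add_le_add (abs_add_le _ _) this))
    _ (κ s) (κ t) rfl le_rfl hk le_rfl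
  simpa [hκ s hs, hκ t ht] using key

lemma sew (a b : ℝ) (hab : a ≤ b) (f g : ℝ → ℝ) (w : ℝ → ℝ → ℝ) (θ : ℝ) (hθ : 1 < θ)
    (hw0 : ∀ s t, a ≤ s → s ≤ t → t ≤ b → 0 ≤ w s t)
    (hws : ∀ s u t, a ≤ s → s ≤ u → u ≤ t → t ≤ b → w s u + w u t ≤ w s t)
    (K0 : ℝ) (hK0 : GoodK f g w θ K0 a b) :
    ∃ Y : ℝ → ℝ, Y a = 0 ∧ ∀ s t K, a ≤ s → s ≤ t → t ≤ b → GoodK f g w θ K s t →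
      |Y t - Y s - f s * (g t - g s)| ≤ 2 / (1 - 2 ^ (1 - θ)) * K * w s t ^ θ := by
  classical
  have h1 : ∀ D : Finset (Set.Icc a b), ∃ Y : ℝ → ℝ, Y a = 0 ∧
      ∀ s t K, ∀ hs : s ∈ Set.Icc a b, ∀ ht : t ∈ Set.Icc a b,
        (⟨s, hs⟩ : Set.Icc a b) ∈ D → (⟨t, ht⟩ : Set.Icc a b) ∈ D → s ≤ t → GoodK f g w θ K s t →
      |Y t - Y s - f s * (g t - g s)| ≤ 2 / (1 - 2 ^ (1 - θ)) * K * w s t ^ θ := by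
    intro D
    obtain ⟨Y, hY⟩ := sewFin a b hab f g w θ hθ hw0 hws (D.image Subtype.val) (by
      intro x hx
      obtain ⟨y, -, rfl⟩ := Finset.mem_image.mp hx
      exact y.2)
    refine ⟨fun x => Y x - Y a, by simp, ?_⟩
    intro s t K hs ht hsD htD hst hK
    have := hY s t K (Finset.mem_image.mpr ⟨_, hsD, rfl⟩) (Finset.mem_image.mpr ⟨_, htD, rfl⟩) hst hK
    simpa using this
  choose YD hYa hYD using h1
  let U : Ultrafilter (Finset (Set.Icc a b)) := Ultrafilter.of atTop
  have hU : (U : Filter (Finset (Set.Icc a b))) ≤ atTop := Ultrafilter.of_le atTop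
  have hev : ∀ x : Set.Icc a b, ∀ᶠ D in (U : Filter (Finset (Set.Icc a b))), x ∈ D := by
    intro x
    refine hU ?_
    filter_upwards [eventually_ge_atTop {x}] with D hD
    exact hD (by simp)
  have hlim : ∀ t, ∃ y, t ∈ Set.Icc a b → Tendsto (fun D => YD D t) U (nhds y) := by
    intro t
    by_cases ht : t ∈ Set.Icc a b
    swap
    · exact ⟨0, fun h => absurd h ht⟩
    have haI : a ∈ Set.Icc a b := ⟨le_rfl, hab⟩
    set B := 2 / (1 - 2 ^ (1 - θ)) * K0 * w a t ^ θ
    have hKt : GoodK f g w θ K0 a t :=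
      ⟨hK0.1, fun x y z h1 h2 h3 h4 => hK0.2 x y z h1 h2 h3 (h4.trans ht.2)⟩
    have hb : ∀ᶠ D in (U : Filter (Finset (Set.Icc a b))),
        YD D t ∈ Set.Icc (f a * (g t - g a) - B) (f a * (g t - g a) + B) := by
      filter_upwards [hev ⟨a, haI⟩, hev ⟨t, ht⟩] with D h1 h2
      have := hYD D a t K0 haI ht h1 h2 ht.1 hKt
      rw [hYa, abs_le] at this
      constructor <;> linarith [this.1, this.2]
    obtain ⟨y, -, hy⟩ := isCompact_Icc.ultrafilter_le_nhds (U.map fun D => YD D t)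
      (le_principal_iff.mpr hb)
    exact ⟨y, fun _ => hy⟩
  choose Y hY using hlim
  refine ⟨Y, ?_, ?_⟩
  · have := hY a ⟨le_rfl, hab⟩
    simp only [hYa] at this
    exact tendsto_nhds_unique this tendsto_const_nhds
  · intro s t K has hst htb hK
    have hs : s ∈ Set.Icc a b := ⟨has, hst.trans htb⟩
    have ht : t ∈ Set.Icc a b := ⟨has.trans hst, htb⟩
    refine le_of_tendsto ((((hY t ht).sub (hY s hs)).sub_const (f s * (g t - g s))).abs) ?_
    filter_upwards [hev ⟨s, hs⟩, hev ⟨t, ht⟩] with D h1 h2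
    exact hYD D s t K hs ht h1 h2 hst hK

lemma osc_unif (a b : ℝ) (f g : ℝ → ℝ) (h : NoCommonDiscont f g a b) (B : ℝ)
    (hfB : ∀ x ∈ Set.Icc a b, ∀ y ∈ Set.Icc a b, |f y - f x| ≤ B)
    (hgB : ∀ x ∈ Set.Icc a b, ∀ y ∈ Set.Icc a b, |g y - g x| ≤ B) (η : ℝ) (hη : 0 < η) :
    ∃ δ > 0, ∀ s t, a ≤ s → s ≤ t → t ≤ b → t - s < δ →
      ∀ x ∈ Set.Icc s t, ∀ y ∈ Set.Icc s t, ∀ x' ∈ Set.Icc s t, ∀ y' ∈ Set.Icc s t,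
      |f y - f x| * |g y' - g x'| ≤ η := by
  let c : Set (Set ℝ) := {U | IsOpen U ∧ ∀ x ∈ U ∩ Set.Icc a b, ∀ y ∈ U ∩ Set.Icc a b,
    ∀ x' ∈ U ∩ Set.Icc a b, ∀ y' ∈ U ∩ Set.Icc a b, |f y - f x| * |g y' - g x'| ≤ η}
  have aux : ∀ f : ℝ → ℝ, ∀ z ∈ Set.Icc a b, ContinuousWithinAt f (Set.Icc a b) z → ∀ r > 0,
      ∃ U, IsOpen U ∧ z ∈ U ∧ ∀ x ∈ U ∩ Set.Icc a b, ∀ y ∈ U ∩ Set.Icc a b, |f y - f x| ≤ r := by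
    intro f z hz hc r hr
    rw [Metric.continuousWithinAt_iff] at hc
    obtain ⟨d, hd, hd'⟩ := hc (r/2) (by linarith)
    refine ⟨Metric.ball z d, Metric.isOpen_ball, Metric.mem_ball_self hd, ?_⟩
    intro x hx y hy
    have e1 := hd' hx.2 hx.1
    have e2 := hd' hy.2 hy.1
    rw [← Real.dist_eq]
    have := dist_triangle_right (f y) (f x) (f z)
    linarith
  obtain ⟨δ, hδ, hδ'⟩ := lebesgue_number_lemma_of_metric_sUnion (s := Set.Icc a b) (c := c)
    isCompact_Icc (fun U hU => hU.1) (by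
      intro z hz
      have hB : 0 ≤ B := (abs_nonneg _).trans (hfB z hz z hz)
      have hr : 0 < η / (B + 1) := by positivity
      have hrB : η / (B + 1) * B ≤ η := by
        rw [div_mul_eq_mul_div, div_le_iff₀ (by linarith)]; nlinarith
      rcases h z hz with hc | hc
      · obtain ⟨U, hUo, hzU, hU⟩ := aux f z hz hc _ hr
        refine ⟨U, ⟨hUo, fun x hx y hy x' hx' y' hy' => le_trans ?_ hrB⟩, hzU⟩
        exact mul_le_mul (hU x hx y hy) (hgB _ hx'.2 _ hy'.2) (abs_nonneg _) hr.le
      · obtain ⟨U, hUo, hzU, hU⟩ := aux g z hz hc _ hr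
        refine ⟨U, ⟨hUo, fun x hx y hy x' hx' y' hy' => le_trans ?_ hrB⟩, hzU⟩
        rw [mul_comm]
        exact mul_le_mul (hU x' hx' y' hy') (hfB _ hx.2 _ hy.2) (abs_nonneg _) hr.le)
  refine ⟨δ, hδ, ?_⟩
  intro s t has hst htb hts x hx y hy x' hx' y' hy'
  obtain ⟨U, hU, hsub⟩ := hδ' s ⟨has, hst.trans htb⟩
  have hm : ∀ z ∈ Set.Icc s t, z ∈ U ∩ Set.Icc a b := by
    intro z hz
    refine ⟨hsub ?_, has.trans hz.1, hz.2.trans htb⟩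
    rw [Metric.mem_ball, Real.dist_eq, abs_of_nonneg (by linarith [hz.1])]
    linarith [hz.2]
  exact hU.2 x (hm x hx) y (hm y hy) x' (hm x' hx') y' (hm y' hy')

lemma sum_super (a b : ℝ) (w : ℝ → ℝ → ℝ)
    (hw0 : ∀ s t, a ≤ s → s ≤ t → t ≤ b → 0 ≤ w s t)
    (hws : ∀ s u t, a ≤ s → s ≤ u → u ≤ t → t ≤ b → w s u + w u t ≤ w s t) :
    ∀ (n : ℕ) (t : Fin (n+1) → ℝ), Monotone t → (∀ i, t i ∈ Set.Icc a b) →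
      ∑ i : Fin n, w (t i.castSucc) (t i.succ) ≤ w (t 0) (t (Fin.last n)) := by
  intro n
  induction n with
  | zero => intro t _ ht; simpa using hw0 _ _ (ht 0).1 le_rfl (ht 0).2
  | succ n ih =>
    intro t hm ht
    rw [Fin.sum_univ_castSucc]
    have e := ih (fun i => t i.castSucc) (hm.comp Fin.strictMono_castSucc.monotone) (fun i => ht _)
    have e2 := hws (t 0) (t (Fin.last n).castSucc) (t (Fin.last (n+1))) (ht _).1 (hm (Fin.zero_le _))
      (hm (Fin.le_last _)) (ht _).2
    simp only [Fin.castSucc_zero, Fin.castSucc_succ, Fin.succ_last] at *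
    linarith
/-- Remark 5 (second estimate): `q`-variation bound for the indefinite
Riemann–Stieltjes integral `t ↦ ∫_a^t f dg`. -/
theorem indefinite_rs_integral_qvar_bound'
    (p q : ℝ) (hp : 1 < p) (hq : 1 < q) (hpq : 1 / p + 1 / q > 1) :
    ∃ C : ℝ, 0 < C ∧ ∀ (a b : ℝ), a < b → ∀ f g : ℝ → ℝ,
      NoCommonDiscont f g a b → pVar f p a b < ⊤ → pVar g q a b < ⊤ →
      ∃ Y : ℝ → ℝ, (∀ t ∈ Set.Icc a b, RSIntegral f g a t (Y t)) ∧
        pVarNorm Y q a b ≤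
          (C * pVarNorm f p a b + supNorm f a b) * pVarNorm g q a b := by
  have hp0 : 0 < p := by linarith
  have hq0 : 0 < q := by linarith
  set θ : ℝ := 1 / p + 1 / q with hθdef
  have hθ1 : 1 < θ := hpq
  have hθ0 : 0 < θ := by linarith
  set θ' : ℝ := (1 + θ) / 2 with hθ'def
  have hθ' : 1 < θ' := by rw [hθ'def]; linarith
  have hθ'θ : θ' < θ := by rw [hθ'def]; linarith
  have hh2 : (2:ℝ) ^ (1 - θ') < 1 :=
      Real.rpow_lt_one_of_one_lt_of_neg (by norm_num) (by linarith)
  set C : ℝ := 2 / (1 - 2 ^ (1 - θ')) with hCdef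
  have hC : 0 < C := div_pos (by norm_num) (by linarith)
  refine ⟨C, hC, ?_⟩
  intro a b hab f g hnc hf hg
  have haI : a ∈ Set.Icc a b := ⟨le_rfl, hab.le⟩
  set ρ : ℝ := θ' / θ with hρdef
  have hρ1 : ρ < 1 := by rw [hρdef, div_lt_one hθ0]; exact hθ'θ
  have hρ0 : 0 < ρ := by rw [hρdef]; positivity
  have hθρ : θ * ρ = θ' := by rw [hρdef]; field_simp
  have hαβ : 1 / p / θ + 1 / q / θ = 1 := by rw [← add_div, ← hθdef]; exact div_self hθ0.ne'
  have hα : 0 < 1 / p / θ := by positivity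
  have hβ : 0 < 1 / q / θ := by positivity
  obtain ⟨w, hw⟩ : ∃ w : ℝ → ℝ → ℝ, w = fun s t =>
    FV f p s t ^ (1 / p / θ) * FV g q s t ^ (1 / q / θ) := ⟨_, rfl⟩
  have hw0' : ∀ s t, 0 ≤ w s t := by
    intro s t; rw [hw]
    exact mul_nonneg (Real.rpow_nonneg FV_nonneg _) (Real.rpow_nonneg FV_nonneg _)
  have hw0 : ∀ s t, a ≤ s → s ≤ t → t ≤ b → 0 ≤ w s t := fun s t _ _ _ => hw0' s t
  have hws : ∀ s u t, a ≤ s → s ≤ u → u ≤ t → t ≤ b → w s u + w u t ≤ w s t := by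
    intro s u t h1 h2 h3 h4
    rw [hw]
    refine (holder2 hα hβ hαβ FV_nonneg FV_nonneg FV_nonneg FV_nonneg).trans ?_
    have e1 := FV_add hp0 h2 h3 h1 h4 hf
    have e2 := FV_add hq0 h2 h3 h1 h4 hg
    exact mul_le_mul
      (Real.rpow_le_rpow (add_nonneg FV_nonneg FV_nonneg) e1 hα.le)
      (Real.rpow_le_rpow (add_nonneg FV_nonneg FV_nonneg) e2 hβ.le)
      (Real.rpow_nonneg (add_nonneg FV_nonneg FV_nonneg) _) (Real.rpow_nonneg FV_nonneg _)
  have hwθ : ∀ s t, w s t ^ θ = FV f p s t ^ (1/p) * FV g q s t ^ (1/q) := by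
    intro s t
    rw [hw]
    dsimp only
    rw [Real.mul_rpow (Real.rpow_nonneg FV_nonneg _) (Real.rpow_nonneg FV_nonneg _),
      ← Real.rpow_mul FV_nonneg, ← Real.rpow_mul FV_nonneg, div_mul_cancel₀ _ hθ0.ne',
      div_mul_cancel₀ _ hθ0.ne']
  have hosc : ∀ s t, a ≤ s → t ≤ b → ∀ x ∈ Set.Icc s t, ∀ y ∈ Set.Icc s t,
      ∀ x' ∈ Set.Icc s t, ∀ y' ∈ Set.Icc s t, |f y - f x| * |g y' - g x'| ≤ w s t ^ θ := by
    intro s t has htb x hx y hy x' hx' y' hy'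
    rw [hwθ]
    exact mul_le_mul (FV_diff hp0 hx hy has htb hf) (FV_diff hq0 hx' hy' has htb hg)
      (abs_nonneg _) (Real.rpow_nonneg FV_nonneg _)
  have hinterp : ∀ D η W : ℝ, 0 ≤ D → D ≤ η → 0 ≤ W → D ≤ W ^ θ →
      D ≤ η ^ (1 - ρ) * W ^ θ' := by
    intro D η W hD hDη hW hDW
    have e : D = D ^ (1 - ρ) * D ^ ρ := by
      rw [← Real.rpow_add' hD (by simp)]; simp
    rw [e, ← hθρ, Real.rpow_mul hW]
    have hη : 0 ≤ η := hD.trans hDη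
    exact mul_le_mul (Real.rpow_le_rpow hD hDη (by linarith))
      (Real.rpow_le_rpow hD hDW hρ0.le) (Real.rpow_nonneg hD _) (Real.rpow_nonneg hη _)
  have hgood : ∀ s t η, a ≤ s → t ≤ b → 0 ≤ η →
      (∀ x ∈ Set.Icc s t, ∀ y ∈ Set.Icc s t,
      ∀ x' ∈ Set.Icc s t, ∀ y' ∈ Set.Icc s t, |f y - f x| * |g y' - g x'| ≤ η) →
      GoodK f g w θ' (η ^ (1 - ρ)) s t := by
    intro s t η has htb hη hh
    refine ⟨Real.rpow_nonneg hη _, ?_⟩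
    intro x y z h1 h2 h3 h4
    refine hinterp _ _ _ (by positivity) ?_ (hw0' _ _) ?_
    · exact hh x ⟨h1, by linarith⟩ y ⟨by linarith, by linarith⟩ y ⟨by linarith, by linarith⟩
        z ⟨by linarith, by linarith⟩
    · exact hosc x z (by linarith) (by linarith) x ⟨by linarith, by linarith⟩ y ⟨h2, h3⟩
        y ⟨h2, h3⟩ z ⟨by linarith, by linarith⟩
  obtain ⟨Y, hYa, hY⟩ := sew a b hab.le f g w θ' hθ' hw0 hws _
    (hgood a b (w a b ^ θ) le_rfl le_rfl (Real.rpow_nonneg (hw0' _ _) _) (hosc a b le_rfl le_rfl))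
  have hwmono : ∀ s t, a ≤ s → s ≤ t → t ≤ b → w s t ≤ w a b := by
    intro s t h1 h2 h3
    have e1 := hws a s b le_rfl h1 (h2.trans h3) le_rfl
    have e2 := hws s t b h1 h2 h3 le_rfl
    have := hw0' a s
    have := hw0' t b
    linarith
  refine ⟨Y, ?_, ?_⟩
  · intro T hT ε hε
    set Q : ℝ := (1 + C) * w a b ^ θ' with hQ
    have hQ0 : 0 ≤ Q := mul_nonneg (by linarith) (Real.rpow_nonneg (hw0' _ _) _)
    set r : ℝ := ε / (Q + 1) with hr
    have hr0 : 0 < r := by positivity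
    have hrQ : r * Q < ε := by
      rw [hr, div_mul_eq_mul_div, div_lt_iff₀ (by linarith)]; nlinarith
    set η : ℝ := r ^ (1 / (1 - ρ)) with hη
    have hη0 : 0 < η := Real.rpow_pos_of_pos hr0 _
    have hηr : η ^ (1 - ρ) = r := by
      rw [hη, ← Real.rpow_mul hr0.le, div_mul_cancel₀ _ (by linarith), Real.rpow_one]
    set B : ℝ := max (FV f p a b ^ (1/p)) (FV g q a b ^ (1/q)) with hB
    obtain ⟨δ, hδ, hδ'⟩ := osc_unif a b f g hnc B
      (fun x hx y hy => (FV_diff hp0 hx hy le_rfl le_rfl hf).trans (le_max_left _ _))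
      (fun x hx y hy => (FV_diff hq0 hx hy le_rfl le_rfl hg).trans (le_max_right _ _)) η hη0
    refine ⟨δ, hδ, ?_⟩
    intro n t ξ ht ht0 htl hξ hmesh
    have htm : ∀ i, t i ∈ Set.Icc a b := fun i =>
      ⟨by rw [← ht0]; exact ht.monotone (Fin.zero_le _),
        le_trans (by rw [← htl]; exact ht.monotone (Fin.le_last _)) hT.2⟩
    have htel : ∑ i : Fin n, (Y (t i.succ) - Y (t i.castSucc)) = Y T := by
      have := Fin.sum_univ_succ (fun i => Y (t i))
      rw [Fin.sum_univ_castSucc (fun i => Y (t i)), ht0, htl, hYa] at this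
      rw [Finset.sum_sub_distrib]
      linarith
    have hterm : ∀ i : Fin n, |f (ξ i) * (g (t i.succ) - g (t i.castSucc)) -
        (Y (t i.succ) - Y (t i.castSucc))| ≤
        (1 + C) * r * w a b ^ (θ' - 1) * w (t i.castSucc) (t i.succ) := by
      intro i
      set s := t i.castSucc with hs
      set u := t i.succ with hu
      have hsu : s ≤ u := (ht i.castSucc_lt_succ).le
      have has : a ≤ s := (htm _).1
      have hub : u ≤ b := (htm _).2
      have hsm := hδ' s u has hsu hub (hmesh i)
      have e1 := hY s u _ has hsu hub (hgood s u η has hub hη0.le hsm)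
      rw [hηr] at e1
      have hsI : s ∈ Set.Icc s u := ⟨le_rfl, hsu⟩
      have huI : u ∈ Set.Icc s u := ⟨hsu, le_rfl⟩
      have e2 := hinterp (|f (ξ i) - f s| * |g u - g s|) η (w s u) (by positivity)
        (hsm s hsI (ξ i) (hξ i) s hsI u huI) (hw0' _ _)
        (hosc s u has hub s hsI (ξ i) (hξ i) s hsI u huI)
      rw [hηr, ← abs_mul] at e2
      have e3 : w s u ^ θ' ≤ w a b ^ (θ' - 1) * w s u := by
        have : w s u ^ θ' = w s u ^ (θ' - 1) * w s u := by
          rw [← Real.rpow_add_one' (hw0' _ _) (by simp; linarith)]; simp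
        rw [this]
        exact mul_le_mul_of_nonneg_right
          (Real.rpow_le_rpow (hw0' _ _) (hwmono s u has hsu hub) (by linarith)) (hw0' _ _)
      have e4 : f (ξ i) * (g u - g s) - (Y u - Y s) =
        (f (ξ i) - f s) * (g u - g s) - (Y u - Y s - f s * (g u - g s)) := by ring
      rw [e4]
      calc _ ≤ |(f (ξ i) - f s) * (g u - g s)| + |Y u - Y s - f s * (g u - g s)| := abs_sub _ _
        _ ≤ r * w s u ^ θ' + C * r * w s u ^ θ' := add_le_add e2 e1
        _ = (1 + C) * r * w s u ^ θ' := by ring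
        _ ≤ (1 + C) * r * (w a b ^ (θ' - 1) * w s u) :=
            mul_le_mul_of_nonneg_left e3 (by positivity)
        _ = _ := by ring
    rw [← htel, ← Finset.sum_sub_distrib]
    have hsum := sum_super a b w hw0 hws n t ht.monotone htm
    have hpos : 0 ≤ (1 + C) * r * w a b ^ (θ' - 1) :=
      mul_nonneg (by positivity) (Real.rpow_nonneg (hw0' _ _) _)
    calc _ ≤ ∑ i : Fin n, (1 + C) * r * w a b ^ (θ' - 1) * w (t i.castSucc) (t i.succ) :=
          (Finset.abs_sum_le_sum_abs _ _).trans (Finset.sum_le_sum fun i _ => hterm i)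
      _ = (1 + C) * r * w a b ^ (θ' - 1) * ∑ i : Fin n, w (t i.castSucc) (t i.succ) := by
          rw [Finset.mul_sum]
      _ ≤ (1 + C) * r * w a b ^ (θ' - 1) * w a b := by
          refine mul_le_mul_of_nonneg_left (hsum.trans ?_) hpos
          rw [ht0, htl]
          exact hwmono a T le_rfl hT.1 hT.2
      _ = r * Q := by
          have : w a b ^ θ' = w a b ^ (θ' - 1) * w a b := by
            rw [← Real.rpow_add_one' (hw0' _ _) (by simp; linarith)]; simp
          rw [hQ, this]; ring
      _ < ε := hrQ
  · set Vf := (pVar f p a b).toReal with hVf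
    set Vg := (pVar g q a b).toReal with hVg
    have hVf0 : 0 ≤ Vf := ENNReal.toReal_nonneg
    have hVg0 : 0 ≤ Vg := ENNReal.toReal_nonneg
    have hsup : ∀ s ∈ Set.Icc a b, |f s| ≤ supNorm f a b := by
      intro s hs
      refine le_csSup ⟨|f a| + FV f p a b ^ (1/p), ?_⟩ ⟨s, hs, rfl⟩
      rintro _ ⟨x, hx, rfl⟩
      have := FV_diff hp0 haI hx le_rfl le_rfl hf
      have e := abs_add_le (f x - f a) (f a)
      rw [sub_add_cancel] at e
      linarith
    have hsup0 : 0 ≤ supNorm f a b := (abs_nonneg _).trans (hsup a haI)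
    set M : ℝ := C * pVarNorm f p a b + supNorm f a b with hM
    have hpf : pVarNorm f p a b = Vf ^ (1/p) := rfl
    have hpg : pVarNorm g q a b = Vg ^ (1/q) := rfl
    have hM0 : 0 ≤ M := by rw [hM, hpf]; positivity
    have hinc : ∀ s t, a ≤ s → s ≤ t → t ≤ b → |Y t - Y s| ^ q ≤ M ^ q * FV g q s t := by
      intro s t has hst htb
      have hsI : s ∈ Set.Icc s t := ⟨le_rfl, hst⟩
      have htI : t ∈ Set.Icc s t := ⟨hst, le_rfl⟩
      have e1 := hY s t _ has hst htb (hgood s t (w s t ^ θ) has htb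
        (Real.rpow_nonneg (hw0' _ _) _) (hosc s t has htb))
      have e2 : (w s t ^ θ) ^ (1 - ρ) * w s t ^ θ' = w s t ^ θ := by
        rw [← hθρ, Real.rpow_mul (hw0' s t) θ ρ,
          ← Real.rpow_add' (Real.rpow_nonneg (hw0' _ _) _) (by simp)]
        simp
      rw [mul_assoc, e2, hwθ] at e1
      have e3 := FV_diff hq0 hsI htI has htb hg
      have e4 := hsup s ⟨has, hst.trans htb⟩
      have e5 : FV f p s t ^ (1/p) ≤ Vf ^ (1/p) :=
        Real.rpow_le_rpow FV_nonneg (FV_le hp0 hst has htb hf) (by positivity)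
      have hG0 : 0 ≤ FV g q s t ^ (1/q) := Real.rpow_nonneg FV_nonneg _
      have e6 : |Y t - Y s| ≤ M * FV g q s t ^ (1/q) := by
        have h1 := abs_add_le (Y t - Y s - f s * (g t - g s)) (f s * (g t - g s))
        rw [sub_add_cancel, abs_mul] at h1
        have h2 : |f s| * |g t - g s| ≤ supNorm f a b * FV g q s t ^ (1/q) :=
          mul_le_mul e4 e3 (abs_nonneg _) hsup0
        have h3 : C * (FV f p s t ^ (1/p) * FV g q s t ^ (1/q)) ≤
            C * (Vf ^ (1/p) * FV g q s t ^ (1/q)) := by gcongr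
        rw [hM, hpf]
        linarith
      have e7 := Real.rpow_le_rpow (abs_nonneg _) e6 hq0.le
      rwa [Real.mul_rpow hM0 hG0, ← Real.rpow_mul FV_nonneg, one_div_mul_cancel hq0.ne',
        Real.rpow_one] at e7
    have hMq : 0 ≤ M ^ q := Real.rpow_nonneg hM0 _
    have hpv : pVar Y q a b ≤ ENNReal.ofReal (M ^ q * Vg) := by
      unfold pVar
      refine iSup_le fun n => iSup_le fun t => iSup_le fun ht => iSup_le fun htm => ?_
      rw [← ENNReal.ofReal_sum_of_nonneg (fun i _ => by positivity)]
      refine ENNReal.ofReal_le_ofReal ?_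
      have hs := sum_super a b (FV g q) (fun _ _ _ _ _ => FV_nonneg)
        (fun s u t h1 h2 h3 h4 => FV_add hq0 h2 h3 h1 h4 hg) n t ht.monotone htm
      calc _ ≤ ∑ i : Fin n, M ^ q * FV g q (t i.castSucc) (t i.succ) :=
            Finset.sum_le_sum fun i _ =>
              hinc _ _ (htm _).1 (ht i.castSucc_lt_succ).le (htm _).2
        _ = M ^ q * ∑ i : Fin n, FV g q (t i.castSucc) (t i.succ) := by rw [Finset.mul_sum]
        _ ≤ M ^ q * Vg := by
            refine mul_le_mul_of_nonneg_left (hs.trans ?_) hMq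
            exact FV_le hq0 (ht.monotone (Fin.zero_le _)) (htm _).1 (htm _).2 hg
    have hfin : (pVar Y q a b).toReal ≤ M ^ q * Vg :=
      ENNReal.toReal_le_of_le_ofReal (by positivity) hpv
    have := Real.rpow_le_rpow ENNReal.toReal_nonneg hfin (show 0 ≤ 1 / q by positivity)
    rw [Real.mul_rpow hMq hVg0, ← Real.rpow_mul hM0, mul_one_div_cancel hq0.ne',
      Real.rpow_one] at this
    exact this
end

section
/- Let p ∈ (1;2), let a < b, let y₀ ∈ ℝ, let x : [a;b] → ℝ be continuous with finite p-variation, and let F : ℝ → ℝ be globally α-Lipschitz with p − 1 < α < 1, i.e. there is K ≥ 0 with |F(u) − F(v)| ≤ K·|u − v|^α for all u, v ∈ ℝ. Then there exists a function y : [a;b] → ℝ of finite p-variation such that for every t ∈ [a;b] the Riemann–Stieltjes integral ∫_a^t F(y(s)) dx(s) exists and y(t) = y₀ + ∫_a^t F(y(s)) dx(s). -/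
open Filter Set

namespace AlphaLip

/-- consecutive-difference sum along a list -/
noncomputable def LS (x : ℝ → ℝ) (p : ℝ) : List ℝ → ℝ
  | [] => 0
  | [_] => 0
  | c :: d :: l => |x d - x c| ^ p + LS x p (d :: l)

lemma LS_nonneg (x : ℝ → ℝ) (p : ℝ) : ∀ l, 0 ≤ LS x p l
  | [] => le_rfl
  | [_] => le_rfl
  | c :: d :: l => by
    have := LS_nonneg x p (d :: l)
    rw [LS]; positivity

lemma LS_append (x : ℝ → ℝ) (p : ℝ) (l2 : List ℝ) :
    ∀ l1, LS x p l1 + LS x p l2 ≤ LS x p (l1 ++ l2)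
  | [] => by simp [LS]
  | [c] => by
    cases l2 with
    | nil => simp [LS]
    | cons d l =>
      have : (0:ℝ) ≤ |x d - x c| ^ p := by positivity
      simp [LS]; exact this
  | c :: d :: l => by
    have := LS_append x p l2 (d :: l)
    simp only [List.cons_append, LS] at this ⊢
    linarith

lemma LS_strict (x : ℝ → ℝ) (p : ℝ) (hp : 0 < p) : ∀ (c : ℝ) (l : List ℝ), (c :: l).Pairwise (· ≤ ·) →
    ∃ l', (c :: l').Pairwise (· < ·) ∧ (∀ v ∈ l', v ∈ l) ∧ LS x p (c :: l') = LS x p (c :: l)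
  | c, [] => fun _ => ⟨[], by simp, by simp, rfl⟩
  | c, d :: l => fun h => by
    obtain ⟨l', h1, h2, h3⟩ := LS_strict x p hp d l (List.pairwise_cons.1 h).2
    have hcd : c ≤ d := (List.pairwise_cons.1 h).1 d (by simp)
    rcases hcd.eq_or_lt with rfl | hlt
    · refine ⟨l', h1, fun v hv => by simp [h2 v hv], ?_⟩
      simp [LS, h3, Real.zero_rpow hp.ne']
    · refine ⟨d :: l', List.pairwise_cons.2 ⟨?_, h1⟩, ?_, ?_⟩
      · intro v hv
        rcases List.mem_cons.1 hv with rfl | hv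
        · exact hlt
        · exact hlt.trans ((List.pairwise_cons.1 h1).1 v hv)
      · intro v hv
        rcases List.mem_cons.1 hv with rfl | hv
        · simp
        · simp [h2 v hv]
      · simp [LS, h3]

lemma LS_eq_sum (x : ℝ → ℝ) (p : ℝ) : ∀ (c : ℝ) (l : List ℝ),
    LS x p (c :: l) = ∑ i : Fin l.length,
      |x ((c :: l).get i.succ) - x ((c :: l).get i.castSucc)| ^ p
  | c, [] => by simp [LS]
  | c, d :: l => by
    rw [LS, LS_eq_sum x p d l]
    simp only [List.length_cons]
    rw [Fin.sum_univ_succ]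
    rfl

lemma LS_le_pVar (x : ℝ → ℝ) (p a b : ℝ) (hp : 0 < p) (l : List ℝ) (hl : l.Pairwise (· ≤ ·))
    (hm : ∀ v ∈ l, v ∈ Icc a b) : ENNReal.ofReal (LS x p l) ≤ pVar x p a b := by
  cases l with
  | nil => simp [LS]
  | cons c l =>
    obtain ⟨l', h1, h2, h3⟩ := LS_strict x p hp c l hl
    rw [← h3, LS_eq_sum, ENNReal.ofReal_sum_of_nonneg (fun i _ => by positivity), pVar]
    refine le_iSup_of_le l'.length (le_iSup_of_le (fun i => (c :: l').get i) ?_)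
    refine le_iSup_of_le ?_ (le_iSup_of_le ?_ le_rfl)
    · intro i j hij
      exact List.pairwise_iff_get.1 h1 i j hij
    · intro i
      have : (c :: l').get i ∈ c :: l' := List.get_mem _ _
      apply hm
      rcases List.mem_cons.1 this with h | h
      · exact List.mem_cons.2 (Or.inl h)
      · exact List.mem_cons.2 (Or.inr (h2 _ h))

def LSset (x : ℝ → ℝ) (p s t : ℝ) : Set ℝ :=
  {z | ∃ l : List ℝ, l.Pairwise (· ≤ ·) ∧ (∀ v ∈ l, v ∈ Icc s t) ∧ LS x p l = z}

/-- the control -/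
noncomputable def om (x : ℝ → ℝ) (p s t : ℝ) : ℝ := sSup (LSset x p s t)

/-- abstract controls of `x` -/
structure Ctrl (x : ℝ → ℝ) (r a b : ℝ) (ω : ℝ → ℝ → ℝ) : Prop where
  nonneg : ∀ s t, a ≤ s → s ≤ t → t ≤ b → 0 ≤ ω s t
  add : ∀ s u t, a ≤ s → s ≤ u → u ≤ t → t ≤ b → ω s u + ω u t ≤ ω s t
  inc : ∀ s t, a ≤ s → s ≤ t → t ≤ b → |x t - x s| ≤ ω s t ^ (1 / r)

lemma LSset_nonempty (x : ℝ → ℝ) (p s t : ℝ) : (LSset x p s t).Nonempty :=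
  ⟨0, [], by simp, by simp, rfl⟩

lemma om_ctrl (x : ℝ → ℝ) (p a b : ℝ) (hp : 0 < p) (hb : BddAbove (LSset x p a b)) :
    Ctrl x p a b (om x p) := by
  have hsub : ∀ s t, a ≤ s → t ≤ b → BddAbove (LSset x p s t) := by
    intro s t hs ht
    refine hb.mono ?_
    rintro z ⟨l, h1, h2, h3⟩
    exact ⟨l, h1, fun v hv => ⟨hs.trans (h2 v hv).1, (h2 v hv).2.trans ht⟩, h3⟩
  have hnn : ∀ s t, a ≤ s → s ≤ t → t ≤ b → 0 ≤ om x p s t := fun s t hs _ ht =>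
    le_csSup (hsub s t hs ht) ⟨[], by simp, by simp, rfl⟩
  refine ⟨hnn, ?_, ?_⟩
  · intro s u t hs hsu hut ht
    have key : ∀ z ∈ LSset x p s u, ∀ w ∈ LSset x p u t, z + w ≤ om x p s t := by
      rintro z ⟨l, h1, h2, rfl⟩ w ⟨l', h1', h2', rfl⟩
      refine (LS_append x p l' l).trans (le_csSup (hsub s t hs ht) ⟨l ++ l', ?_, ?_, rfl⟩)
      · refine List.pairwise_append.2 ⟨h1, h1', fun v hv w hw => (h2 v hv).2.trans (h2' w hw).1⟩
      · intro v hv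
        rcases List.mem_append.1 hv with h | h
        · exact ⟨(h2 v h).1, (h2 v h).2.trans hut⟩
        · exact ⟨hsu.trans (h2' v h).1, (h2' v h).2⟩
    have h1 : ∀ w ∈ LSset x p u t, om x p s u ≤ om x p s t - w := fun w hw =>
      csSup_le (LSset_nonempty _ _ _ _) fun z hz => by linarith [key z hz w hw]
    have h2 : om x p u t ≤ om x p s t - om x p s u :=
      csSup_le (LSset_nonempty _ _ _ _) fun w hw => by linarith [h1 w hw]
    linarith
  · intro s t hs hst ht
    have h : |x t - x s| ^ p ≤ om x p s t :=
      le_csSup (hsub s t hs ht) ⟨[s, t], by simp [hst], by simp [hst], by simp [LS]⟩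
    calc |x t - x s| = (|x t - x s| ^ p) ^ (1 / p) := by
          rw [← Real.rpow_mul (abs_nonneg _), mul_one_div_cancel hp.ne', Real.rpow_one]
      _ ≤ _ := Real.rpow_le_rpow (by positivity) h (by positivity)

lemma LSset_bdd (x : ℝ → ℝ) (p a b : ℝ) (hp : 0 < p) (hx : pVar x p a b < ⊤) :
    BddAbove (LSset x p a b) := by
  refine ⟨(pVar x p a b).toReal, ?_⟩
  rintro z ⟨l, h1, h2, rfl⟩
  exact (ENNReal.ofReal_le_iff_le_toReal hx.ne).1 (LS_le_pVar x p a b hp l h1 h2)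

lemma LS_interp (x : ℝ → ℝ) (p q d s t : ℝ) (hp : 0 < p) (hpq : p ≤ q)
    (hd : ∀ u ∈ Icc s t, ∀ v ∈ Icc s t, |x u - x v| ≤ d) : ∀ l : List ℝ, (∀ v ∈ l, v ∈ Icc s t) →
    LS x q l ≤ d ^ (q - p) * LS x p l
  | [], _ => by simp [LS]
  | [c], _ => by simp [LS]
  | c :: e :: l, h => by
    have ih := LS_interp x p q d s t hp hpq hd (e :: l) (fun v hv => h v (List.mem_cons_of_mem _ hv))
    have h1 := hd e (h e (by simp)) c (h c (by simp))
    have h2 : |x e - x c| ^ q ≤ d ^ (q - p) * |x e - x c| ^ p := by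
      calc |x e - x c| ^ q = |x e - x c| ^ (q - p) * |x e - x c| ^ p := by
            rw [← Real.rpow_add_of_nonneg (abs_nonneg _) (by linarith) hp.le]; congr 1; ring
        _ ≤ _ := by
            gcongr
    rw [LS, LS, mul_add]
    linarith

lemma om_interp (x : ℝ → ℝ) (p q d a b s t : ℝ) (hp : 0 < p) (hpq : p ≤ q) (hd0 : 0 ≤ d)
    (hb : BddAbove (LSset x p a b)) (hs : a ≤ s) (ht : t ≤ b)
    (hd : ∀ u ∈ Icc s t, ∀ v ∈ Icc s t, |x u - x v| ≤ d) :
    om x q s t ≤ d ^ (q - p) * om x p a b := by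
  refine csSup_le (LSset_nonempty _ _ _ _) ?_
  rintro z ⟨l, h1, h2, rfl⟩
  refine (LS_interp x p q d s t hp hpq hd l h2).trans ?_
  gcongr
  exact le_csSup hb ⟨l, h1, fun v hv => ⟨hs.trans (h2 v hv).1, (h2 v hv).2.trans ht⟩, rfl⟩

lemma LSset_bdd' (x : ℝ → ℝ) (p q d a b : ℝ) (hp : 0 < p) (hpq : p ≤ q) (hd0 : 0 ≤ d)
    (hb : BddAbove (LSset x p a b))
    (hd : ∀ u ∈ Icc a b, ∀ v ∈ Icc a b, |x u - x v| ≤ d) :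
    BddAbove (LSset x q a b) := by
  refine ⟨d ^ (q - p) * om x p a b, ?_⟩
  rintro z ⟨l, h1, h2, rfl⟩
  refine (LS_interp x p q d a b hp hpq hd l h2).trans ?_
  gcongr
  exact le_csSup hb ⟨l, h1, h2, rfl⟩

lemma Ctrl.mono {x : ℝ → ℝ} {r a b : ℝ} {ω : ℝ → ℝ → ℝ} (H : Ctrl x r a b ω) {s s' t' t : ℝ}
    (h0 : a ≤ s) (h1 : s ≤ s') (h2 : s' ≤ t') (h3 : t' ≤ t) (h4 : t ≤ b) : ω s' t' ≤ ω s t := by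
  have := H.add s s' t h0 h1 (h2.trans h3) h4
  have := H.add s' t' t (h0.trans h1) h2 h3 h4
  have := H.nonneg s s' h0 h1 (by linarith)
  have := H.nonneg t' t (by linarith) h3 h4
  linarith

lemma Ctrl.self {x : ℝ → ℝ} {r a b : ℝ} {ω : ℝ → ℝ → ℝ} (H : Ctrl x r a b ω) {s : ℝ}
    (h0 : a ≤ s) (h1 : s ≤ b) : ω s s = 0 := by
  have := H.add s s s h0 le_rfl le_rfl h1
  have := H.nonneg s s h0 le_rfl h1
  linarith

lemma Ctrl.sum {x : ℝ → ℝ} {r a b : ℝ} {ω : ℝ → ℝ → ℝ} (H : Ctrl x r a b ω) :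
    ∀ (n : ℕ) (t : Fin (n + 1) → ℝ), Monotone t → (∀ i, t i ∈ Icc a b) →
    ∑ i : Fin n, ω (t i.castSucc) (t i.succ) ≤ ω (t 0) (t (Fin.last n))
  | 0, t, _, hm => by
    simp; exact H.nonneg _ _ (hm 0).1 le_rfl (hm 0).2
  | n + 1, t, ht, hm => by
    have ih := Ctrl.sum H n (fun i => t i.castSucc) (fun i j h => ht (by simpa using h)) (fun i => hm _)
    rw [Fin.sum_univ_castSucc]
    simp only [Fin.succ_castSucc, Fin.succ_last, Fin.castSucc_zero] at ih ⊢
    have := H.add (t 0) (t (Fin.last n).castSucc) (t (Fin.last (n+1))) (hm _).1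
      (ht (Fin.zero_le _)) (ht (Fin.le_last _)) (hm _).2
    linarith

/-- Euler scheme on a grid -/
noncomputable def euler (F x : ℝ → ℝ) (y₀ : ℝ) (T : Finset ℝ) (t : ℝ) : ℝ :=
  if h : (T.filter (· < t)).Nonempty then
    euler F x y₀ T ((T.filter (· < t)).max' h) +
      F (euler F x y₀ T ((T.filter (· < t)).max' h)) * (x t - x ((T.filter (· < t)).max' h))
  else y₀
termination_by (T.filter (· < t)).card
decreasing_by
  all_goals
    have hm := Finset.max'_mem _ h
    rw [Finset.mem_filter] at hm
    apply Finset.card_lt_card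
    refine ⟨fun v hv => ?_, fun hh => ?_⟩
    · rw [Finset.mem_filter] at hv ⊢
      exact ⟨hv.1, hv.2.trans hm.2⟩
    · have := hh (Finset.max'_mem _ h)
      rw [Finset.mem_filter] at this
      exact lt_irrefl _ this.2

/-- `y` solves the Euler recursion on the grid `T` -/
def IsEuler (F x : ℝ → ℝ) (T : Finset ℝ) (y : ℝ → ℝ) : Prop :=
  ∀ u ∈ T, ∀ v ∈ T, u < v → (∀ w ∈ T, w < v → w ≤ u) → y v - y u - F (y u) * (x v - x u) = 0

lemma euler_isEuler (F x : ℝ → ℝ) (y₀ : ℝ) (T : Finset ℝ) : IsEuler F x T (euler F x y₀ T) := by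
  intro u hu v hv huv hw
  have hne : (T.filter (· < v)).Nonempty := ⟨u, by simp [hu, huv]⟩
  have hm : (T.filter (· < v)).max' hne = u := by
    apply le_antisymm
    · apply Finset.max'_le
      intro w hw'
      rw [Finset.mem_filter] at hw'
      exact hw w hw'.1 hw'.2
    · exact Finset.le_max' _ _ (by simp [hu, huv])
  rw [euler.eq_def F x y₀ T v, dif_pos hne, hm]
  ring

lemma euler_init (F x : ℝ → ℝ) (y₀ : ℝ) (T : Finset ℝ) (a : ℝ) (h : ∀ v ∈ T, a ≤ v) :
    euler F x y₀ T a = y₀ := by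
  rw [euler.eq_def, dif_neg]
  rintro ⟨v, hv⟩
  rw [Finset.mem_filter] at hv
  linarith [h v hv.1]

lemma split {x : ℝ → ℝ} {r a b : ℝ} {ω : ℝ → ℝ → ℝ} (H : Ctrl x r a b ω) (T : Finset ℝ)
    (hT : ∀ v ∈ T, v ∈ Icc a b) {s t : ℝ} (hs : s ∈ T) (ht : t ∈ T) (hst : s < t) :
    ∃ u ∈ T, ∃ u' ∈ T, s ≤ u ∧ u < u' ∧ u' ≤ t ∧ (∀ w ∈ T, w < u' → w ≤ u) ∧
      ω s u ≤ ω s t / 2 ∧ ω u' t ≤ ω s t / 2 := by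
  have hW : 0 ≤ ω s t := H.nonneg s t (hT s hs).1 hst.le (hT t ht).2
  obtain ⟨u, hu, hum⟩ := Finset.exists_max_image
    (T.filter (fun v => s ≤ v ∧ v < t ∧ ω s v ≤ ω s t / 2)) id
    ⟨s, by
      rw [Finset.mem_filter]
      refine ⟨hs, le_rfl, hst, ?_⟩
      rw [H.self (hT s hs).1 (hT s hs).2]; linarith⟩
  rw [Finset.mem_filter] at hu
  obtain ⟨huT, hsu, hut, huw⟩ := hu
  obtain ⟨u', hu', hum'⟩ := Finset.exists_min_image
    (T.filter (fun v => u < v ∧ v ≤ t)) id ⟨t, by simp [ht, hut]⟩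
  rw [Finset.mem_filter] at hu'
  obtain ⟨huT', huu', hut'⟩ := hu'
  refine ⟨u, huT, u', huT', hsu, huu', hut', ?_, huw, ?_⟩
  · intro w hw hwu
    by_contra! hc
    have := hum' w (by simp [hw, hc, (hwu.trans_le hut').le])
    simp at this
    linarith
  · rcases hut'.eq_or_lt with h | h
    · rw [h, H.self (hT t ht).1 (hT t ht).2]; linarith
    · have h1 : ω s t / 2 < ω s u' := by
        by_contra! hc
        have := hum u' (by simp [huT', hc, h, (hsu.trans huu'.le)])
        simp at this
        linarith
      have := H.add s u' t (hT s hs).1 (hsu.trans huu'.le) hut' (hT t ht).2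
      linarith

lemma rpow_split {W α r : ℝ} (hW : 0 ≤ W) (hα : 0 < α) (hr : 0 < r) :
    (W ^ (1 / r)) ^ α * W ^ (1 / r) = W ^ ((1 + α) / r) := by
  rw [← Real.rpow_mul hW, ← Real.rpow_add_of_nonneg hW (by positivity) (by positivity)]
  congr 1; field_simp; ring

lemma rpow_split' {W α r : ℝ} (hW : 0 ≤ W) (hα : 0 < α) (hr : 0 < r) :
    W ^ ((1 + α) / r) = W ^ (α / r) * W ^ (1 / r) := by
  rw [← Real.rpow_add_of_nonneg hW (by positivity) (by positivity)]
  congr 1; field_simp; ring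

lemma hold_G {F : ℝ → ℝ} {K α : ℝ} (hK : 0 ≤ K) (hα0 : 0 < α) (hα2 : α < 1)
    (hF : ∀ u v : ℝ, |F u - F v| ≤ K * |u - v| ^ α) {G z u v : ℝ} (hG : 1 ≤ G) (hz : 0 ≤ z)
    (h : |u - v| ≤ 3 * G * z) : |F u - F v| ≤ 3 * K * G * z ^ α := by
  calc |F u - F v| ≤ K * |u - v| ^ α := hF u v
    _ ≤ K * (3 * G * z) ^ α := by gcongr
    _ = K * ((3 * G) ^ α * z ^ α) := by rw [Real.mul_rpow (by positivity) hz]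
    _ ≤ K * ((3 * G) * z ^ α) := by
        gcongr
        exact Real.rpow_le_self_of_one_le (by linarith) hα2.le
    _ = _ := by ring

lemma local_est {x : ℝ → ℝ} {r a b : ℝ} {ω : ℝ → ℝ → ℝ} (H : Ctrl x r a b ω) (hr : 0 < r)
    {F : ℝ → ℝ} {K α : ℝ} (hK : 0 ≤ K) (hα0 : 0 < α) (hα2 : α < 1)
    (hF : ∀ u v : ℝ, |F u - F v| ≤ K * |u - v| ^ α) {C : ℝ} (hC : 0 ≤ C)
    (hC' : 2 * C * (1 / 2) ^ ((1 + α) / r) + 6 * K ≤ C) (T : Finset ℝ)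
    (hT : ∀ v ∈ T, v ∈ Icc a b) {y : ℝ → ℝ} (hy : IsEuler F x T y) {G : ℝ} (hG : 1 ≤ G)
    (hFG : ∀ v ∈ T, |F (y v)| ≤ G) : ∀ (n : ℕ) (s t : ℝ), s ∈ T → t ∈ T → s ≤ t →
      (T.filter (fun v => s ≤ v ∧ v ≤ t)).card ≤ n → C * ω s t ^ (α / r) ≤ 1 →
      |y t - y s - F (y s) * (x t - x s)| ≤ C * G * ω s t ^ ((1 + α) / r) ∧
      |y t - y s| ≤ 2 * G * ω s t ^ (1 / r) := by
  intro n
  induction n with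
  | zero =>
    intro s t hs ht hst hc
    exfalso
    have := Finset.card_pos.2 (⟨s, by simp [hs, hst]⟩ : (T.filter (fun v => s ≤ v ∧ v ≤ t)).Nonempty)
    omega
  | succ n ih =>
    intro s t hs ht hst hc hCW
    have hW : 0 ≤ ω s t := H.nonneg s t (hT s hs).1 hst (hT t ht).2
    have hG0 : 0 ≤ G := by linarith
    have hr1 : 0 < 1 / r := by positivity
    have hθ : 0 < (1 + α) / r := by positivity
    have hαr : 0 < α / r := by positivity
    suffices hJ : |y t - y s - F (y s) * (x t - x s)| ≤ C * G * ω s t ^ ((1 + α) / r) by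
      refine ⟨hJ, ?_⟩
      have e1 : |F (y s) * (x t - x s)| ≤ G * ω s t ^ (1 / r) := by
        rw [abs_mul]
        exact mul_le_mul (hFG s hs) (H.inc s t (hT s hs).1 hst (hT t ht).2) (abs_nonneg _) hG0
      have e2 : C * G * ω s t ^ ((1 + α) / r) ≤ G * ω s t ^ (1 / r) := by
        rw [rpow_split' hW hα0 hr]
        have : 0 ≤ G * ω s t ^ (1 / r) := by positivity
        nlinarith
      have e3 : y t - y s = (y t - y s - F (y s) * (x t - x s)) + F (y s) * (x t - x s) := by ring
      rw [e3]
      refine (abs_add_le _ _).trans ?_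
      linarith
    rcases hst.eq_or_lt with rfl | hlt
    · simp; positivity
    obtain ⟨u, hu, u', hu', hsu, huu', hut', hcons, hw1, hw2⟩ := split H T hT hs ht hlt
    have hsa := (hT s hs).1
    have htb := (hT t ht).2
    have hut : u ≤ t := huu'.le.trans hut'
    have hsu' : s ≤ u' := hsu.trans huu'.le
    have c1 : (T.filter (fun v => s ≤ v ∧ v ≤ u)).card ≤ n := by
      have : (T.filter (fun v => s ≤ v ∧ v ≤ u)).card < (T.filter (fun v => s ≤ v ∧ v ≤ t)).card := by
        apply Finset.card_lt_card
        refine ⟨fun v hv => ?_, fun hh => ?_⟩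
        · simp only [Finset.mem_filter] at hv ⊢
          exact ⟨hv.1, hv.2.1, hv.2.2.trans hut⟩
        · have := hh (show t ∈ _ by simp [ht, hst])
          simp only [Finset.mem_filter] at this
          linarith [this.2.2]
      omega
    have c2 : (T.filter (fun v => u' ≤ v ∧ v ≤ t)).card ≤ n := by
      have : (T.filter (fun v => u' ≤ v ∧ v ≤ t)).card < (T.filter (fun v => s ≤ v ∧ v ≤ t)).card := by
        apply Finset.card_lt_card
        refine ⟨fun v hv => ?_, fun hh => ?_⟩
        · simp only [Finset.mem_filter] at hv ⊢
          exact ⟨hv.1, hsu'.trans hv.2.1, hv.2.2⟩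
        · have := hh (show s ∈ _ by simp [hs, hst])
          simp only [Finset.mem_filter] at this
          linarith [this.2.1]
      omega
    have n1 := H.nonneg s u hsa hsu (hut.trans htb)
    have n2 := H.nonneg u' t (hsa.trans hsu') hut' htb
    have hsm : ∀ w, 0 ≤ w → w ≤ ω s t / 2 → C * w ^ (α / r) ≤ 1 := by
      intro w hw hw'
      refine le_trans ?_ hCW
      gcongr
      linarith
    obtain ⟨j1, d1⟩ := ih s u hs hu hsu c1 (hsm _ n1 hw1)
    obtain ⟨j2, d2⟩ := ih u' t hu' ht hut' c2 (hsm _ n2 hw2)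
    have j0 := hy u hu u' hu' huu' hcons
    have half : ∀ w, 0 ≤ w → w ≤ ω s t / 2 → C * G * w ^ ((1 + α) / r) ≤
        C * G * ((1 / 2) ^ ((1 + α) / r) * ω s t ^ ((1 + α) / r)) := by
      intro w hw hw'
      rw [← Real.mul_rpow (by norm_num) hW]
      gcongr
      linarith
    have k1 := j1.trans (half _ n1 hw1)
    have k2 := j2.trans (half _ n2 hw2)
    have d1' : |y u - y s| ≤ 2 * G * ω s t ^ (1 / r) := by
      refine d1.trans ?_
      gcongr
      linarith
    have x0 : |x u' - x u| ≤ ω s t ^ (1 / r) := by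
      refine (H.inc u u' (hsa.trans hsu) huu'.le (hut'.trans htb)).trans ?_
      have := H.nonneg u u' (hsa.trans hsu) huu'.le (hut'.trans htb)
      have := H.mono hsa hsu huu'.le hut' htb
      gcongr
    have x1 : |x t - x u'| ≤ ω s t ^ (1 / r) := by
      refine (H.inc u' t (hsa.trans hsu') hut' htb).trans ?_
      gcongr
      linarith
    have d0 : |y u' - y u| ≤ G * ω s t ^ (1 / r) := by
      have : y u' - y u = F (y u) * (x u' - x u) := by linarith
      rw [this, abs_mul]
      exact mul_le_mul (hFG u hu) x0 (abs_nonneg _) hG0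
    have hz : 0 ≤ ω s t ^ (1 / r) := by positivity
    have hGz : 0 ≤ G * ω s t ^ (1 / r) := by positivity
    have f1 := hold_G hK hα0 hα2 hF (u := y u) (v := y s) hG hz (by linarith)
    have f2 := hold_G hK hα0 hα2 hF (u := y u') (v := y s) hG hz (by
      have : y u' - y s = (y u' - y u) + (y u - y s) := by ring
      rw [this]
      refine (abs_add_le _ _).trans ?_
      linarith)
    have hKG : 0 ≤ 3 * K * G * (ω s t ^ (1 / r)) ^ α := by positivity
    have g1 : |(F (y u) - F (y s)) * (x u' - x u)| ≤ 3 * K * G * ω s t ^ ((1 + α) / r) := by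
      rw [abs_mul, ← rpow_split hW hα0 hr, ← mul_assoc]
      exact mul_le_mul f1 x0 (abs_nonneg _) hKG
    have g2 : |(F (y u') - F (y s)) * (x t - x u')| ≤ 3 * K * G * ω s t ^ ((1 + α) / r) := by
      rw [abs_mul, ← rpow_split hW hα0 hr, ← mul_assoc]
      exact mul_le_mul f2 x1 (abs_nonneg _) hKG
    have e : y t - y s - F (y s) * (x t - x s) =
        (y u - y s - F (y s) * (x u - x s)) + (y t - y u' - F (y u') * (x t - x u'))
        + (F (y u) - F (y s)) * (x u' - x u) + (F (y u') - F (y s)) * (x t - x u') := by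
      linear_combination j0
    rw [e]
    have b1 := abs_add_le ((y u - y s - F (y s) * (x u - x s)) + (y t - y u' - F (y u') * (x t - x u'))
        + (F (y u) - F (y s)) * (x u' - x u)) ((F (y u') - F (y s)) * (x t - x u'))
    have b2 := abs_add_le ((y u - y s - F (y s) * (x u - x s)) + (y t - y u' - F (y u') * (x t - x u')))
        ((F (y u) - F (y s)) * (x u' - x u))
    have b3 := abs_add_le (y u - y s - F (y s) * (x u - x s)) (y t - y u' - F (y u') * (x t - x u'))
    have hfin : (2 * C * (1 / 2) ^ ((1 + α) / r) + 6 * K) * (G * ω s t ^ ((1 + α) / r)) ≤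
        C * (G * ω s t ^ ((1 + α) / r)) := by gcongr
    nlinarith

lemma osc_est {x : ℝ → ℝ} {r a b : ℝ} {ω : ℝ → ℝ → ℝ} (H : Ctrl x r a b ω) (hr : 0 < r)
    (hab : a ≤ b) {F : ℝ → ℝ} {K α : ℝ} (hK : 0 ≤ K) (hα0 : 0 < α) (hα2 : α < 1)
    (hF : ∀ u v : ℝ, |F u - F v| ≤ K * |u - v| ^ α) {C : ℝ} (hC : 0 ≤ C)
    (hC' : 2 * C * (1 / 2) ^ ((1 + α) / r) + 6 * K ≤ C) {η : ℝ}
    (hη : ∀ w, 0 ≤ w → w ≤ η → C * w ^ (α / r) ≤ 1) (k : ℕ) :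
    ∃ D : ℝ, 0 ≤ D ∧ ∀ (T : Finset ℝ) (y : ℝ → ℝ) (G : ℝ), (∀ v ∈ T, v ∈ Icc a b) →
      IsEuler F x T y → 1 ≤ G → (∀ v ∈ T, |F (y v)| ≤ G) →
      ∀ s t : ℝ, s ∈ T → t ∈ T → s ≤ t → ω s t ≤ 2 ^ k * η → |y t - y s| ≤ D * G := by
  have hWab : 0 ≤ ω a b := H.nonneg a b le_rfl hab le_rfl
  have hr1 : 0 < 1 / r := by positivity
  induction k with
  | zero =>
    refine ⟨2 * ω a b ^ (1 / r), by positivity, ?_⟩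
    intro T y G hT hy hG hFG s t hs ht hst hw
    have hW : 0 ≤ ω s t := H.nonneg s t (hT s hs).1 hst (hT t ht).2
    have h := (local_est H hr hK hα0 hα2 hF hC hC' T hT hy hG hFG _ s t hs ht hst le_rfl
      (hη _ hW (by simpa using hw))).2
    have hm := H.mono le_rfl (hT s hs).1 hst (hT t ht).2 le_rfl
    calc _ ≤ _ := h
      _ ≤ 2 * G * ω a b ^ (1 / r) := by gcongr
      _ = _ := by ring
  | succ k ih =>
    obtain ⟨D, hD, ih⟩ := ih
    refine ⟨2 * D + ω a b ^ (1 / r), by positivity, ?_⟩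
    intro T y G hT hy hG hFG s t hs ht hst hw
    rcases hst.eq_or_lt with rfl | hlt
    · simp; positivity
    obtain ⟨u, hu, u', hu', hsu, huu', hut', hcons, hw1, hw2⟩ := split H T hT hs ht hlt
    rw [pow_succ] at hw
    have i1 := ih T y G hT hy hG hFG s u hs hu hsu (by linarith)
    have i2 := ih T y G hT hy hG hFG u' t hu' ht hut' (by linarith)
    have j0 := hy u hu u' hu' huu' hcons
    have x0 : |x u' - x u| ≤ ω a b ^ (1 / r) := by
      refine (H.inc u u' (hT u hu).1 huu'.le (hT _ hu').2).trans ?_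
      have := H.nonneg u u' (hT u hu).1 huu'.le (hT _ hu').2
      have := H.mono le_rfl (hT u hu).1 huu'.le (hT _ hu').2 le_rfl
      gcongr
    have d0 : |y u' - y u| ≤ G * ω a b ^ (1 / r) := by
      have : y u' - y u = F (y u) * (x u' - x u) := by linarith
      rw [this, abs_mul]
      exact mul_le_mul (hFG u hu) x0 (abs_nonneg _) (by linarith)
    have e : y t - y s = (y u - y s) + (y u' - y u) + (y t - y u') := by ring
    rw [e]
    refine (abs_add_le _ _).trans ?_
    have := abs_add_le (y u - y s) (y u' - y u)
    linarith

lemma sublin {K α D : ℝ} (hK : 0 ≤ K) (hα2 : α < 1) (hα0 : 0 < α) (hD : 0 ≤ D) (A Y : ℝ)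
    (hA : 0 ≤ A) (hY : 0 ≤ Y) :
    ∃ B : ℝ, ∀ G : ℝ, 0 ≤ G → G ≤ A + K * (Y + D * G) ^ α → G ≤ B := by
  have hlim : Tendsto (fun z : ℝ => K * (2 * (D + 1)) * z ^ (-(1 - α))) atTop
      (nhds (K * (2 * (D + 1)) * 0)) :=
    (tendsto_rpow_neg_atTop (by linarith)).const_mul _
  rw [mul_zero] at hlim
  obtain ⟨Z, hZ⟩ := (eventually_atTop.1 (hlim.eventually (gt_mem_nhds (zero_lt_one (α := ℝ)))))
  set Z' := max Z 1 with hZ'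
  refine ⟨2 * A + 2 * Y + K * Z' ^ α, fun G hG h => ?_⟩
  have hZ0 : 0 < Z' := lt_of_lt_of_le one_pos (le_max_right _ _)
  have p1 : 0 ≤ K * Z' ^ α := by positivity
  rcases le_total (Y + D * G) Z' with hc | hc
  · have : K * (Y + D * G) ^ α ≤ K * Z' ^ α := by gcongr
    linarith
  · have hz0 : 0 < Y + D * G := hZ0.trans_le hc
    have h1 := hZ (Y + D * G) ((le_max_left _ _).trans hc)
    have h2 : (Y + D * G) ^ α = (Y + D * G) ^ (-(1 - α)) * (Y + D * G) := by
      conv_rhs => rw [← Real.rpow_add_one hz0.ne']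
      congr 1; ring
    rw [h2] at h
    set m := (Y + D * G) ^ (-(1 - α)) with hm
    have h3 : K * m * (2 * (D + 1)) * (Y + D * G) ≤ 1 * (Y + D * G) := by
      gcongr; linarith
    have h4 : (2 * (D + 1)) * G ≤ (2 * (D + 1)) * A + (Y + D * G) := by
      have : (2 * (D + 1)) * G ≤ (2 * (D + 1)) * (A + K * (m * (Y + D * G))) := by gcongr
      linarith
    have h5 : 0 ≤ D * Y := by positivity
    have h6 : (D + 1) * G ≤ (D + 1) * (2 * A + 2 * Y) := by nlinarith
    have h7 : G ≤ 2 * A + 2 * Y := le_of_mul_le_mul_left h6 (by linarith)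
    linarith

lemma global_est {x : ℝ → ℝ} {r a b : ℝ} {ω : ℝ → ℝ → ℝ} (H : Ctrl x r a b ω) (hr : 0 < r)
    (hab : a ≤ b) {F : ℝ → ℝ} {K α : ℝ} (hK : 0 ≤ K) (hα0 : 0 < α) (hα2 : α < 1)
    (hrα : r < 1 + α)
    (hF : ∀ u v : ℝ, |F u - F v| ≤ K * |u - v| ^ α) (y₀ : ℝ) :
    ∃ B M : ℝ, 0 ≤ B ∧ 0 ≤ M ∧ ∀ (T : Finset ℝ) (y : ℝ → ℝ), (∀ v ∈ T, v ∈ Icc a b) →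
      a ∈ T → IsEuler F x T y → y a = y₀ → (∀ v ∈ T, |y v| ≤ B) ∧
      ∀ s t : ℝ, s ∈ T → t ∈ T → s ≤ t →
        |y t - y s - F (y s) * (x t - x s)| ≤ M * ω s t ^ ((1 + α) / r) := by
  have hWab : 0 ≤ ω a b := H.nonneg a b le_rfl hab le_rfl
  have hθ : 1 < (1 + α) / r := by rw [lt_div_iff₀ hr]; linarith
  have hαr : 0 < α / r := by positivity
  have hr1 : 0 < 1 / r := by positivity
  set θ := (1 + α) / r with hθd
  have hh : ((1:ℝ) / 2) ^ θ < 1 / 2 := by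
    have := Real.rpow_lt_rpow_of_exponent_gt (x := (1:ℝ)/2) (by norm_num) (by norm_num) hθ
    simpa using this
  set h2 := ((1:ℝ) / 2) ^ θ with hh2
  have hden : 0 < 1 - 2 * h2 := by linarith
  obtain ⟨C, hCd⟩ : ∃ C, C = 6 * K / (1 - 2 * h2) := ⟨_, rfl⟩
  have hC : 0 ≤ C := by rw [hCd]; positivity
  have hC' : 2 * C * h2 + 6 * K ≤ C := by
    have : C * (1 - 2 * h2) = 6 * K := by rw [hCd]; field_simp
    linarith
  obtain ⟨η, hηd⟩ : ∃ η : ℝ, η = (1 / (C + 1)) ^ (1 / (α / r)) := ⟨_, rfl⟩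
  have hη0 : 0 < η := by rw [hηd]; positivity
  have hη : ∀ w, 0 ≤ w → w ≤ η → C * w ^ (α / r) ≤ 1 := by
    intro w hw hwη
    have : w ^ (α / r) ≤ 1 / (C + 1) := by
      calc w ^ (α / r) ≤ η ^ (α / r) := by gcongr
        _ = 1 / (C + 1) := by
          rw [hηd, ← Real.rpow_mul (by positivity), one_div_mul_cancel hαr.ne', Real.rpow_one]
    calc C * w ^ (α / r) ≤ C * (1 / (C + 1)) := by gcongr
      _ ≤ 1 := by rw [mul_one_div, div_le_one (by positivity)]; linarith
  obtain ⟨k, hk⟩ := pow_unbounded_of_one_lt (ω a b / η) (one_lt_two)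
  rw [div_lt_iff₀ hη0] at hk
  obtain ⟨D, hD, hosc⟩ := osc_est H hr hab hK hα0 hα2 hF hC hC' hη k
  obtain ⟨B, hB⟩ := sublin hK hα2 hα0 hD (1 + |F 0|) |y₀| (by positivity) (by positivity)
  have hB1 : ∀ (T : Finset ℝ) (y : ℝ → ℝ), (∀ v ∈ T, v ∈ Icc a b) →
      a ∈ T → IsEuler F x T y → y a = y₀ → ∃ G, 1 ≤ G ∧ G ≤ B ∧ ∀ v ∈ T, |F (y v)| ≤ G := by
    intro T y hT haT hy hya
    obtain ⟨v0, hv0, hmax⟩ := Finset.exists_max_image T (fun v => |F (y v)|) ⟨a, haT⟩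
    have hG : ∀ v ∈ T, |F (y v)| ≤ max 1 |F (y v0)| := fun v hv => (hmax v hv).trans (le_max_right _ _)
    refine ⟨max 1 |F (y v0)|, le_max_left _ _, ?_, hG⟩
    apply hB _ (by positivity)
    have ho := hosc T y _ hT hy (le_max_left _ _) hG a v0 haT hv0 (hT v0 hv0).1
      ((H.mono le_rfl le_rfl (hT v0 hv0).1 (hT v0 hv0).2 le_rfl).trans hk.le)
    set G := max 1 |F (y v0)|
    have hyv : |y v0| ≤ |y₀| + D * G := by
      have : y v0 = y₀ + (y v0 - y a) := by rw [hya]; ring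
      rw [this]
      exact (abs_add_le _ _).trans (by linarith)
    have h1 : |F (y v0)| ≤ |F 0| + K * (|y₀| + D * G) ^ α := by
      have e : F (y v0) = F 0 + (F (y v0) - F 0) := by ring
      rw [e]
      refine (abs_add_le _ _).trans ?_
      have := hF (y v0) 0
      rw [sub_zero] at this
      have h3 : K * |y v0| ^ α ≤ K * (|y₀| + D * G) ^ α := by gcongr
      linarith
    have hG0 : 0 ≤ G := le_trans zero_le_one (le_max_left _ _)
    have h4 : 0 ≤ K * (|y₀| + D * G) ^ α := by positivity
    apply max_le
    · linarith [abs_nonneg (F 0)]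
    · linarith
  by_cases hBpos : B < 1
  · refine ⟨0, 0, le_rfl, le_rfl, ?_⟩
    intro T y hT haT hy hya
    obtain ⟨G, g1, g2, -⟩ := hB1 T y hT haT hy hya
    linarith
  push Not at hBpos
  refine ⟨|y₀| + D * B, C * B + (D * B + B * ω a b ^ (1 / r)) / η ^ θ, by positivity,
    by positivity, ?_⟩
  intro T y hT haT hy hya
  obtain ⟨G, g1, g2, g3⟩ := hB1 T y hT haT hy hya
  have hFB : ∀ v ∈ T, |F (y v)| ≤ B := fun v hv => (g3 v hv).trans g2
  have hosc' : ∀ s t : ℝ, s ∈ T → t ∈ T → s ≤ t → |y t - y s| ≤ D * B := by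
    intro s t hs ht hst
    exact hosc T y B hT hy hBpos hFB s t hs ht hst
      ((H.mono le_rfl (hT s hs).1 hst (hT t ht).2 le_rfl).trans hk.le)
  refine ⟨?_, ?_⟩
  · intro v hv
    have := hosc' a v haT hv (hT v hv).1
    have e : y v = y₀ + (y v - y a) := by rw [hya]; ring
    rw [e]
    exact (abs_add_le _ _).trans (by linarith)
  · intro s t hs ht hst
    have hW : 0 ≤ ω s t := H.nonneg s t (hT s hs).1 hst (hT t ht).2
    rcases le_total (ω s t) η with hc | hc
    · have := (local_est H hr hK hα0 hα2 hF hC hC' T hT hy hBpos hFB _ s t hs ht hst le_rfl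
        (hη _ hW hc)).1
      refine this.trans ?_
      gcongr
      have : 0 ≤ (D * B + B * ω a b ^ (1 / r)) / η ^ θ := by positivity
      linarith
    · have h1 := hosc' s t hs ht hst
      have h2 : |F (y s) * (x t - x s)| ≤ B * ω a b ^ (1 / r) := by
        rw [abs_mul]
        refine mul_le_mul (hFB s hs) ?_ (abs_nonneg _) (by linarith)
        refine (H.inc s t (hT s hs).1 hst (hT t ht).2).trans ?_
        have := H.mono le_rfl (hT s hs).1 hst (hT t ht).2 le_rfl
        gcongr
      have h3 := abs_sub (y t - y s) (F (y s) * (x t - x s))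
      have h4 : η ^ θ ≤ ω s t ^ θ := by gcongr
      have h5 : D * B + B * ω a b ^ (1 / r) ≤ (D * B + B * ω a b ^ (1 / r)) / η ^ θ * ω s t ^ θ := by
        rw [div_mul_eq_mul_div, le_div_iff₀ (by positivity)]
        gcongr
      have h6 : 0 ≤ C * B * ω s t ^ θ := by positivity
      rw [add_mul]
      linarith

lemma holder_continuous {F : ℝ → ℝ} {K α : ℝ} (hα0 : 0 < α)
    (hF : ∀ u v : ℝ, |F u - F v| ≤ K * |u - v| ^ α) : Continuous F := by
  rw [continuous_iff_continuousAt]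
  intro v
  have h : Tendsto (fun u : ℝ => K * |u - v| ^ α) (nhds v) (nhds (K * |v - v| ^ α)) := by
    have : Continuous (fun u : ℝ => K * |u - v| ^ α) :=
      continuous_const.mul ((Real.continuous_rpow_const hα0.le).comp
        (continuous_abs.comp (continuous_id.sub continuous_const)))
    exact this.tendsto v
  rw [sub_self, abs_zero, Real.zero_rpow hα0.ne', mul_zero] at h
  rw [ContinuousAt, tendsto_iff_dist_tendsto_zero]
  exact squeeze_zero (fun _ => dist_nonneg) (fun u => by rw [Real.dist_eq]; exact hF u v) h

lemma exists_limit {x : ℝ → ℝ} {p q a b : ℝ} {ω ω' : ℝ → ℝ → ℝ} (H : Ctrl x p a b ω)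
    (H' : Ctrl x q a b ω') (hp : 0 < p) (hq : 0 < q)
    (hab : a ≤ b) {F : ℝ → ℝ} {K α : ℝ} (hK : 0 ≤ K) (hα0 : 0 < α) (hα2 : α < 1)
    (hpα : p < 1 + α) (hqα : q < 1 + α)
    (hF : ∀ u v : ℝ, |F u - F v| ≤ K * |u - v| ^ α) (y₀ : ℝ) :
    ∃ (y : ℝ → ℝ) (B M : ℝ), 0 ≤ B ∧ 0 ≤ M ∧ y a = y₀ ∧ (∀ t ∈ Icc a b, |y t| ≤ B) ∧
      ∀ s ∈ Icc a b, ∀ t ∈ Icc a b, s ≤ t →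
        |y t - y s - F (y s) * (x t - x s)| ≤ M * ω s t ^ ((1 + α) / p) ∧
        |y t - y s - F (y s) * (x t - x s)| ≤ M * ω' s t ^ ((1 + α) / q) := by
  obtain ⟨B, M, hB, hM, h1⟩ := global_est H hp hab hK hα0 hα2 hpα hF y₀
  obtain ⟨B', M', hB', hM', h2⟩ := global_est H' hq hab hK hα0 hα2 hqα hF y₀
  classical
  let T : Finset ℝ → Finset ℝ := fun S => insert a (S.filter (fun v => v ∈ Icc a b))
  have hT : ∀ S, ∀ v ∈ T S, v ∈ Icc a b := by
    intro S v hv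
    rcases Finset.mem_insert.1 hv with rfl | hv
    · exact ⟨le_rfl, hab⟩
    · exact (Finset.mem_filter.1 hv).2
  have haT : ∀ S, a ∈ T S := fun S => Finset.mem_insert_self _ _
  let Y : Finset ℝ → ℝ → ℝ := fun S => euler F x y₀ (T S)
  have hY0 : ∀ S, Y S a = y₀ := fun S => euler_init F x y₀ (T S) a (fun v hv => (hT S v hv).1)
  have hE1 := fun S => h1 (T S) (Y S) (hT S) (haT S) (euler_isEuler F x y₀ (T S)) (hY0 S)
  have hE2 := fun S => h2 (T S) (Y S) (hT S) (haT S) (euler_isEuler F x y₀ (T S)) (hY0 S)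
  let U : Ultrafilter (Finset ℝ) := Ultrafilter.of atTop
  have hU : (U : Filter (Finset ℝ)) ≤ atTop := Ultrafilter.of_le _
  have hmem : ∀ t ∈ Icc a b, ∀ᶠ S in (U : Filter (Finset ℝ)), t ∈ T S := by
    intro t ht
    refine hU ?_
    filter_upwards [eventually_ge_atTop ({t} : Finset ℝ)] with S hS
    exact Finset.mem_insert_of_mem (Finset.mem_filter.2 ⟨hS (Finset.mem_singleton_self t), ht⟩)
  have hlim : ∀ t : ℝ, ∃ z : ℝ, t ∈ Icc a b → Tendsto (fun S => Y S t) U (nhds z) := by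
    intro t
    by_cases ht : t ∈ Icc a b
    · have hev : ∀ᶠ S in (U : Filter (Finset ℝ)), Y S t ∈ Icc (-B) B := by
        filter_upwards [hmem t ht] with S hS
        exact abs_le.1 ((hE1 S).1 t hS)
      obtain ⟨z, -, hz⟩ := (isCompact_Icc (a := -B) (b := B)).ultrafilter_le_nhds
        (U.map (fun S => Y S t)) (by rw [le_principal_iff]; exact hev)
      exact ⟨z, fun _ => hz⟩
    · exact ⟨0, fun h => absurd h ht⟩
  choose y hy using hlim
  have hFc := holder_continuous hα0 hF
  refine ⟨y, B, max M M', hB, le_max_of_le_left hM, ?_, ?_, ?_⟩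
  · have := hy a ⟨le_rfl, hab⟩
    simp only [hY0] at this
    exact (tendsto_nhds_unique this tendsto_const_nhds)
  · intro t ht
    refine le_of_tendsto (hy t ht).abs ?_
    filter_upwards [hmem t ht] with S hS
    exact (hE1 S).1 t hS
  · intro s hs t ht hst
    have hl : Tendsto (fun S => |Y S t - Y S s - F (Y S s) * (x t - x s)|) U
        (nhds |y t - y s - F (y s) * (x t - x s)|) :=
      (((hy t ht).sub (hy s hs)).sub
        (((hFc.tendsto _).comp (hy s hs)).mul_const _)).abs
    have n1 := H.nonneg s t hs.1 hst ht.2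
    have n2 := H'.nonneg s t hs.1 hst ht.2
    constructor
    · refine le_of_tendsto hl ?_
      filter_upwards [hmem t ht, hmem s hs] with S hS hS'
      refine ((hE1 S).2 s t hS' hS hst).trans ?_
      gcongr
      exact le_max_left _ _
    · refine le_of_tendsto hl ?_
      filter_upwards [hmem t ht, hmem s hs] with S hS hS'
      refine ((hE2 S).2 s t hS' hS hst).trans ?_
      gcongr
      exact le_max_right _ _

/-- increment bound from the local expansion -/
lemma inc_bound {x : ℝ → ℝ} {p a b : ℝ} {ω : ℝ → ℝ → ℝ} (H : Ctrl x p a b ω) (hp : 0 < p)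
    (hab : a ≤ b) {F : ℝ → ℝ} {α : ℝ} (hα0 : 0 < α)
    {y : ℝ → ℝ} {B M : ℝ} (hM : 0 ≤ M) (hB : 0 ≤ B) (hFB : ∀ t ∈ Icc a b, |F (y t)| ≤ B)
    (h : ∀ s ∈ Icc a b, ∀ t ∈ Icc a b, s ≤ t →
        |y t - y s - F (y s) * (x t - x s)| ≤ M * ω s t ^ ((1 + α) / p)) :
    ∀ s ∈ Icc a b, ∀ t ∈ Icc a b, s ≤ t →
      |y t - y s| ≤ (M * ω a b ^ (α / p) + B) * ω s t ^ (1 / p) := by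
  intro s hs t ht hst
  have h1 := h s hs t ht hst
  have n1 := H.nonneg s t hs.1 hst ht.2
  have hm := H.mono le_rfl hs.1 hst ht.2 le_rfl
  rw [rpow_split' n1 hα0 hp] at h1
  have h2 : M * (ω s t ^ (α / p) * ω s t ^ (1 / p)) ≤ M * (ω a b ^ (α / p) * ω s t ^ (1 / p)) := by
    gcongr
  have h3 : |F (y s) * (x t - x s)| ≤ B * ω s t ^ (1 / p) := by
    rw [abs_mul]
    exact mul_le_mul (hFB s hs) (H.inc s t hs.1 hst ht.2) (abs_nonneg _) hB
  have e : y t - y s = (y t - y s - F (y s) * (x t - x s)) + F (y s) * (x t - x s) := by ring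
  rw [e]
  refine (abs_add_le _ _).trans ?_
  linarith

lemma pVar_fin {x : ℝ → ℝ} {p a b : ℝ} {ω : ℝ → ℝ → ℝ} (H : Ctrl x p a b ω) (hp : 0 < p)
    {y : ℝ → ℝ} {C : ℝ} (hC : 0 ≤ C)
    (h : ∀ s ∈ Icc a b, ∀ t ∈ Icc a b, s ≤ t → |y t - y s| ≤ C * ω s t ^ (1 / p)) :
    pVar y p a b < ⊤ := by
  refine lt_of_le_of_lt (b := ENNReal.ofReal (C ^ p * ω a b)) ?_ ENNReal.ofReal_lt_top
  refine iSup_le fun n => iSup_le fun t => iSup_le fun ht => iSup_le fun hm => ?_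
  rw [← ENNReal.ofReal_sum_of_nonneg (fun i _ => by positivity)]
  apply ENNReal.ofReal_le_ofReal
  have h1 : ∀ i : Fin n, |y (t i.succ) - y (t i.castSucc)| ^ p ≤
      C ^ p * ω (t i.castSucc) (t i.succ) := by
    intro i
    have hle : t i.castSucc ≤ t i.succ := ht.monotone (Fin.castSucc_lt_succ).le
    have n1 := H.nonneg _ _ (hm i.castSucc).1 hle (hm i.succ).2
    calc _ ≤ (C * ω (t i.castSucc) (t i.succ) ^ (1 / p)) ^ p := by
          gcongr
          exact h _ (hm _) _ (hm _) hle
      _ = _ := by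
          rw [Real.mul_rpow hC (by positivity), ← Real.rpow_mul n1, one_div_mul_cancel hp.ne',
            Real.rpow_one]
  calc _ ≤ ∑ i : Fin n, C ^ p * ω (t i.castSucc) (t i.succ) := Finset.sum_le_sum fun i _ => h1 i
    _ = C ^ p * ∑ i : Fin n, ω (t i.castSucc) (t i.succ) := by rw [Finset.mul_sum]
    _ ≤ C ^ p * ω a b := by
      gcongr
      refine (H.sum n t ht.monotone hm).trans ?_
      exact H.mono le_rfl (hm 0).1 (ht.monotone (Fin.zero_le _)) (hm _).2 le_rfl

lemma sum_tele (y : ℝ → ℝ) : ∀ (n : ℕ) (t : Fin (n + 1) → ℝ),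
    ∑ i : Fin n, (y (t i.succ) - y (t i.castSucc)) = y (t (Fin.last n)) - y (t 0)
  | 0, t => by simp
  | n + 1, t => by
    rw [Fin.sum_univ_castSucc]
    have := sum_tele y n (fun i => t i.castSucc)
    simp only [Fin.succ_castSucc, Fin.succ_last, Fin.castSucc_zero] at this ⊢
    rw [this]; ring

lemma rs_of_expansion {x : ℝ → ℝ} {q a b : ℝ} {ω : ℝ → ℝ → ℝ} (H : Ctrl x q a b ω) (hq : 0 < q)
    (hab : a ≤ b) {F : ℝ → ℝ} {K α : ℝ} (hK : 0 ≤ K) (hα0 : 0 < α) (hqα : q < 1 + α)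
    (hF : ∀ u v : ℝ, |F u - F v| ≤ K * |u - v| ^ α)
    (hω : ∀ ρ > 0, ∃ δ > 0, ∀ s ∈ Icc a b, ∀ t ∈ Icc a b, s ≤ t → t - s < δ → ω s t ≤ ρ)
    {y : ℝ → ℝ} {C M : ℝ} (hM : 0 ≤ M) (hC : 0 ≤ C)
    (h : ∀ s ∈ Icc a b, ∀ t ∈ Icc a b, s ≤ t →
        |y t - y s - F (y s) * (x t - x s)| ≤ M * ω s t ^ ((1 + α) / q))
    (h' : ∀ s ∈ Icc a b, ∀ t ∈ Icc a b, s ≤ t → |y t - y s| ≤ C * ω s t ^ (1 / q))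
    (T : ℝ) (hT : T ∈ Icc a b) : RSIntegral (fun s => F (y s)) x a T (y T - y a) := by
  intro ε hε
  have hWab : 0 ≤ ω a b := H.nonneg a b le_rfl hab le_rfl
  have hθ : 1 < (1 + α) / q := by rw [lt_div_iff₀ hq]; linarith
  set θ := (1 + α) / q with hθd
  set A := M + K * C ^ α with hA
  have hA0 : 0 ≤ A := by positivity
  obtain ⟨ρ, hρ0, hρ⟩ : ∃ ρ > 0, A * (ρ ^ (θ - 1) * ω a b) < ε := by
    have hc : Continuous (fun ρ : ℝ => A * (ρ ^ (θ - 1) * ω a b)) :=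
      continuous_const.mul ((Real.continuous_rpow_const (by linarith)).mul continuous_const)
    have ht := hc.tendsto 0
    simp only [Real.zero_rpow (show θ - 1 ≠ 0 by linarith), zero_mul, mul_zero] at ht
    obtain ⟨ρ, h1, h2⟩ := (((ht.mono_left nhdsWithin_le_nhds).eventually (gt_mem_nhds hε)).and
      (self_mem_nhdsWithin : Ioi (0:ℝ) ∈ nhdsWithin 0 (Ioi 0))).exists
    exact ⟨ρ, h2, h1⟩
  obtain ⟨δ, hδ, hδω⟩ := hω ρ hρ0
  refine ⟨δ, hδ, ?_⟩
  intro n t ξ ht ht0 htn hξ hmesh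
  have hm : ∀ i, t i ∈ Icc a b := fun i =>
    ⟨ht0 ▸ ht.monotone (Fin.zero_le i), (htn ▸ ht.monotone (Fin.le_last i) : t i ≤ T).trans hT.2⟩
  rw [← htn, ← ht0, ← sum_tele y n t, ← Finset.sum_sub_distrib]
  have hle : ∀ i : Fin n, t i.castSucc ≤ t i.succ := fun i =>
    ht.monotone (Fin.castSucc_lt_succ).le
  have hn : ∀ i : Fin n, 0 ≤ ω (t i.castSucc) (t i.succ) := fun i =>
    H.nonneg _ _ (hm i.castSucc).1 (hle i) (hm i.succ).2
  have key : ∀ i : Fin n, |F (y (ξ i)) * (x (t i.succ) - x (t i.castSucc)) -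
      (y (t i.succ) - y (t i.castSucc))| ≤ A * (ρ ^ (θ - 1) * ω (t i.castSucc) (t i.succ)) := by
    intro i
    have hs := hm i.castSucc
    have hu := hm i.succ
    have hξm : ξ i ∈ Icc a b := ⟨hs.1.trans (hξ i).1, (hξ i).2.trans hu.2⟩
    have hρi := hδω _ hs _ hu (hle i) (hmesh i)
    have h1 := h _ hs _ hu (hle i)
    have h2 := h' _ hs _ hξm (hξ i).1
    have hx := H.inc _ _ hs.1 (hle i) hu.2
    have hmo := H.mono hs.1 le_rfl (hξ i).1 (hξ i).2 hu.2
    have n1 := H.nonneg _ _ hs.1 (hξ i).1 hξm.2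
    have n0 := hn i
    set s := t i.castSucc
    set u := t i.succ
    set w := ω s u
    have h3 : |F (y (ξ i)) - F (y s)| ≤ K * C ^ α * (w ^ (1 / q)) ^ α := by
      calc _ ≤ K * |y (ξ i) - y s| ^ α := hF _ _
        _ ≤ K * (C * w ^ (1 / q)) ^ α := by
          gcongr
          refine h2.trans ?_
          gcongr
        _ = _ := by rw [Real.mul_rpow hC (by positivity)]; ring
    have h4 : |(F (y (ξ i)) - F (y s)) * (x u - x s)| ≤ K * C ^ α * w ^ θ := by
      rw [abs_mul, hθd, ← rpow_split n0 hα0 hq, ← mul_assoc]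
      exact mul_le_mul h3 hx (abs_nonneg _) (by positivity)
    have h5 : w ^ θ ≤ ρ ^ (θ - 1) * w := by
      calc w ^ θ = w ^ (θ - 1) * w := by
            conv_lhs => rw [show θ = (θ - 1) + 1 by ring,
              Real.rpow_add_of_nonneg n0 (by linarith) zero_le_one, Real.rpow_one]
        _ ≤ _ := by gcongr
    have e : F (y (ξ i)) * (x u - x s) - (y u - y s) =
      (F (y (ξ i)) - F (y s)) * (x u - x s) - (y u - y s - F (y s) * (x u - x s)) := by ring
    rw [e]
    refine (abs_sub _ _).trans ?_
    calc _ ≤ A * w ^ θ := by rw [hA, add_mul]; linarith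
      _ ≤ _ := by gcongr
  refine lt_of_le_of_lt ?_ hρ
  calc _ ≤ _ := Finset.abs_sum_le_sum_abs _ _
    _ ≤ ∑ i : Fin n, A * (ρ ^ (θ - 1) * ω (t i.castSucc) (t i.succ)) :=
        Finset.sum_le_sum fun i _ => key i
    _ = A * (ρ ^ (θ - 1) * ∑ i : Fin n, ω (t i.castSucc) (t i.succ)) := by
        rw [← Finset.mul_sum, ← Finset.mul_sum]
    _ ≤ _ := by
        gcongr
        refine (H.sum n t ht.monotone hm).trans ?_
        exact H.mono le_rfl (hm 0).1 (ht.monotone (Fin.zero_le _)) (hm _).2 le_rfl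

lemma om_small (x : ℝ → ℝ) (p q a b : ℝ) (hp : 0 < p) (hpq : p < q)
    (hxc : ContinuousOn x (Icc a b)) (hb : BddAbove (LSset x p a b)) :
    ∀ ρ > 0, ∃ δ > 0, ∀ s ∈ Icc a b, ∀ t ∈ Icc a b, s ≤ t → t - s < δ → om x q s t ≤ ρ := by
  intro ρ hρ
  obtain ⟨d, hd0, hd⟩ : ∃ d > 0, d ^ (q - p) * om x p a b < ρ := by
    have hc : Continuous (fun d : ℝ => d ^ (q - p) * om x p a b) :=
      (Real.continuous_rpow_const (by linarith)).mul continuous_const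
    have ht := hc.tendsto 0
    simp only [Real.zero_rpow (show q - p ≠ 0 by linarith), zero_mul] at ht
    obtain ⟨d, h1, h2⟩ := (((ht.mono_left nhdsWithin_le_nhds).eventually (gt_mem_nhds hρ)).and
      (self_mem_nhdsWithin : Ioi (0:ℝ) ∈ nhdsWithin 0 (Ioi 0))).exists
    exact ⟨d, h2, h1⟩
  have huc := isCompact_Icc.uniformContinuousOn_of_continuous hxc
  rw [Metric.uniformContinuousOn_iff] at huc
  obtain ⟨δ, hδ, hu⟩ := huc d hd0
  refine ⟨δ, hδ, fun s hs t ht hst hts => ?_⟩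
  refine (om_interp x p q d a b s t hp hpq.le hd0.le hb hs.1 ht.2 ?_).trans hd.le
  intro u hu' v hv'
  have := hu u ⟨hs.1.trans hu'.1, hu'.2.trans ht.2⟩ v ⟨hs.1.trans hv'.1, hv'.2.trans ht.2⟩ (by
    rw [Real.dist_eq, abs_lt]; constructor <;> linarith [hu'.1, hu'.2, hv'.1, hv'.2])
  rw [Real.dist_eq] at this
  exact this.le

end AlphaLip

open AlphaLip

/-- Proposition 1: existence of a solution of finite `p`-variation to the integral
equation `y(t) = y₀ + ∫_a^t F(y(s)) dx(s)` driven by a continuous signal of finite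
`p`-variation, for a globally `α`-Lipschitz `F` with `p − 1 < α < 1`. -/
theorem integral_equation_solution_alpha_lipschitz
    (p : ℝ) (hp : 1 < p) (hp2 : p < 2) (a b : ℝ) (hab : a < b) (y₀ : ℝ)
    (x : ℝ → ℝ) (hxc : ContinuousOn x (Set.Icc a b)) (hx : pVar x p a b < ⊤)
    (α : ℝ) (hα1 : p - 1 < α) (hα2 : α < 1)
    (F : ℝ → ℝ) (K : ℝ) (hK : 0 ≤ K)
    (hF : ∀ u v : ℝ, |F u - F v| ≤ K * |u - v| ^ α) :
    ∃ y : ℝ → ℝ, pVar y p a b < ⊤ ∧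
      ∀ t ∈ Set.Icc a b, RSIntegral (fun s => F (y s)) x a t (y t - y₀) := by
  have hp0 : 0 < p := by linarith
  have hα0 : 0 < α := by linarith
  obtain ⟨q, hpq, hqα⟩ := exists_between (show p < 1 + α by linarith)
  have hq0 : 0 < q := hp0.trans hpq
  have hb := LSset_bdd x p a b hp0 hx
  have H := om_ctrl x p a b hp0 hb
  have hWab : 0 ≤ om x p a b := H.nonneg a b le_rfl hab.le le_rfl
  have hb' : BddAbove (LSset x q a b) := by
    refine LSset_bdd' x p q (om x p a b ^ (1 / p)) a b hp0 hpq.le (by positivity) hb ?_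
    have aux : ∀ u ∈ Icc a b, ∀ v ∈ Icc a b, u ≤ v → |x v - x u| ≤ om x p a b ^ (1 / p) := by
      intro u hu v hv huv
      refine (H.inc u v hu.1 huv hv.2).trans ?_
      have := H.nonneg u v hu.1 huv hv.2
      have := H.mono le_rfl hu.1 huv hv.2 le_rfl
      gcongr
    intro u hu v hv
    rcases le_total u v with h | h
    · rw [abs_sub_comm]; exact aux u hu v hv h
    · exact aux v hv u hu h
  have H' := om_ctrl x q a b hq0 hb'
  have hWab' : 0 ≤ om x q a b := H'.nonneg a b le_rfl hab.le le_rfl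
  obtain ⟨y, B, M, hB, hM, hya, hyB, hJ⟩ := exists_limit H H' hp0 hq0 hab.le hK hα0 hα2
    (by linarith) hqα hF y₀
  have hFB : ∀ t ∈ Icc a b, |F (y t)| ≤ |F 0| + K * B ^ α := by
    intro t ht
    have e : F (y t) = F 0 + (F (y t) - F 0) := by ring
    rw [e]
    refine (abs_add_le _ _).trans ?_
    have h1 := hF (y t) 0
    rw [sub_zero] at h1
    have h2 := hyB t ht
    have h3 : K * |y t| ^ α ≤ K * B ^ α := by gcongr
    linarith
  have hB2 : 0 ≤ |F 0| + K * B ^ α := by positivity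
  have J1 := fun s hs t ht hst => (hJ s hs t ht hst).1
  have J2 := fun s hs t ht hst => (hJ s hs t ht hst).2
  refine ⟨y, ?_, ?_⟩
  · exact pVar_fin H hp0 (by positivity) (inc_bound H hp0 hab.le hα0 hM hB2 hFB J1)
  · intro t ht
    rw [← hya]
    exact rs_of_expansion H' hq0 hab.le hK hα0 hqα hF (om_small x p q a b hp0 hpq hxc hb) hM
      (by positivity) J2 (inc_bound H' hq0 hab.le hα0 hM hB2 hFB J2) t ht
end
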